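/- arXiv:math/9903201 — 7 statements merged into one kernel-verified Lean document; each statement's English description precedes it below -/
import Mathlib

section
/- Let B and B' be complex Banach spaces and let i : B' → B be a compact injective continuous linear map. Let U be an open neighborhood of 0 in B and let T : U → B' be a complex analytic map with T(0) = 0; set R = i ∘ T : U → B, so R(0) = 0. Assume that the spectrum of the bounded operator DR(0) : B → B is contained in the closed unit disk of ℂ and has nonempty intersection with the unit circle. Then R has slow small orbits: for every neighborhood V of 0 with V ⊆ U there exists f ∈ V such that R^m f ∈ V and R^m f ≠ 0 for all m ≥ 0, and (1/m)·log ‖R^m f‖ → 0 as m → ∞. -/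
open Filter Metric

/-!
Let `A = DR(0)`, a compact operator, and let `N` be the finite-dimensional sum of its generalized
eigenspaces for the eigenvalues on the unit circle; the spectral projection `P` onto `N` commutes
with `A`, and `A` has spectral radius less than one on `ker P`. Hence there are adapted seminorms
`α` and `β`, measuring the components in `N` and `ker P`, such that `A` almost does not shrink `α`
and contracts `β` by a definite factor. Near `0` the cone `β ≤ α` is then invariant under `R`, which
shrinks `α` on the cone at most by a factor `κ < 1`; in particular nonzero orbits in the cone never
reach `0`.

It remains to find an orbit in the cone that stays in the ball of radius `r`. If there are points of
the cone with `α ≥ r` that survive in the ball arbitrarily long, compactness of the image of `R`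
yields such an orbit. Otherwise these points all escape within some `n` steps, so a point of `N`
that survives `m` steps and ends with `α < κ ^ n * r` has never left the open ball.
Therefore the injective holomorphic map `Φ = P ∘ R ^ m` on the survivors in `N` covers a disk of
radius independent of `m` in the line `ℂ e`, where `e` is an eigenvector of `A` with unimodular
eigenvalue. As the inverse branch of `Φ` preserves `‖e‖` infinitesimally, the Schwarz lemma puts
some survivor at a definite distance from `0`, and compactness again gives an orbit that stays in
the ball forever. Since `A` shrinks a suitable adapted seminorm by as little as we like, this orbit
decays slower than any exponential.
-/

open MeasureTheory Polynomial Module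
open scoped NNReal Topology

section Volume

variable {E : Type*} [NormedAddCommGroup E]

theorem abs_det_le_card_mul_pow [NormedSpace ℝ E] [FiniteDimensional ℝ E] {f : E →ₗ[ℝ] E}
    {ε : ℝ≥0} {s : Finset E} (hs : IsCover ε (f '' ball 0 1) (s : Set E)) :
    |LinearMap.det f| ≤ s.card * (ε : ℝ) ^ finrank ℝ E := by
  borelize E
  let μ : Measure E := Measure.addHaar
  have hvol : ENNReal.ofReal |LinearMap.det f| * μ (ball 0 1) ≤
      ENNReal.ofReal (s.card * (ε : ℝ) ^ finrank ℝ E) * μ (ball 0 1) :=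
    calc ENNReal.ofReal |LinearMap.det f| * μ (ball 0 1)
      _ = μ (f '' ball 0 1) := (Measure.addHaar_image_linearMap μ f _).symm
      _ ≤ μ (⋃ c ∈ s, closedBall c ε) := measure_mono hs.subset_iUnion_closedBall
      _ ≤ ∑ c ∈ s, μ (closedBall c ε) := measure_biUnion_finset_le _ _
      _ = ENNReal.ofReal (s.card * (ε : ℝ) ^ finrank ℝ E) * μ (ball 0 1) := by
        simp only [Measure.addHaar_closedBall μ _ ε.coe_nonneg, Finset.sum_const, nsmul_eq_mul]
        rw [ENNReal.ofReal_mul (by positivity), ENNReal.ofReal_natCast, mul_assoc]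
  rw [ENNReal.mul_le_mul_iff_left (measure_ball_pos μ _ one_pos).ne' measure_ball_lt_top.ne] at hvol
  exact (ENNReal.ofReal_le_ofReal_iff (by positivity)).1 hvol

theorem norm_det_eq_one {V : Type*} [AddCommGroup V] [Module ℂ V] [FiniteDimensional ℂ V]
    {f : End ℂ V} (h : ∀ μ, f.HasEigenvalue μ → ‖μ‖ = 1) : ‖LinearMap.det f‖ = 1 := by
  rw [End.det_eq_prod_roots_charpoly_of_splits (IsAlgClosed.splits _)]
  refine (map_multiset_prod (normHom : ℂ →*₀ ℝ) _).trans (Multiset.prod_eq_one ?_)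
  simp only [Multiset.mem_map, normHom_apply]
  rintro _ ⟨μ, hμ, rfl⟩
  exact h μ ((End.hasEigenvalue_iff_isRoot_charpoly f μ).2 (isRoot_of_mem_roots hμ))

theorem two_pow_finrank_le_coveringNumber [NormedSpace ℂ E] [FiniteDimensional ℂ E]
    {f : End ℂ E} (h : ∀ μ, f.HasEigenvalue μ → ‖μ‖ = 1) :
    (2 : ℕ∞) ^ finrank ℂ E ≤ coveringNumber (1 / 2) (f '' ball 0 1) := by
  have : FiniteDimensional ℝ E := FiniteDimensional.complexToReal E
  by_cases htop : coveringNumber (1 / 2) (f '' ball 0 1) = ⊤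
  · exact htop ▸ le_top
  obtain ⟨C, -, hfin, hcover, hcard⟩ := exists_set_encard_eq_coveringNumber htop
  lift C to Finset E using hfin
  have hdet : |LinearMap.det (f.restrictScalars ℝ)| = 1 := by
    simp [LinearMap.det_restrictScalars, Algebra.norm_complex_eq, Complex.normSq_eq_norm_sq,
      norm_det_eq_one h]
  have hvol := abs_det_le_card_mul_pow (f := f.restrictScalars ℝ) hcover
  rw [hdet, finrank_real_of_complex] at hvol
  have hreal : (2 : ℝ) ^ finrank ℂ E ≤ C.card :=
    calc (2 : ℝ) ^ finrank ℂ E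
      _ ≤ 2 ^ (2 * finrank ℂ E) := pow_le_pow_right₀ one_le_two (by lia)
      _ ≤ C.card := by
        simpa [← div_eq_mul_inv, le_div_iff₀] using hvol
  rw [← hcard, Set.encard_coe_eq_coe_finsetCard]
  exact_mod_cast hreal

end Volume

section Central

variable {B : Type*} [NormedAddCommGroup B] [NormedSpace ℂ B] {A : B →L[ℂ] B}
  {N : Submodule ℂ B}

/-- `N` is a finite-dimensional invariant subspace on which all eigenvalues of `A` have modulus one;
the largest one is the sum of the generalized eigenspaces for the eigenvalues on the unit circle. -/
structure IsCentral (A : B →L[ℂ] B) (N : Submodule ℂ B) : Prop where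
  finiteDimensional : FiniteDimensional ℂ N
  map_mem : ∀ v ∈ N, A v ∈ N
  norm_eq_one : ∀ v ∈ N, v ≠ 0 → ∀ μ : ℂ, A v = μ • v → ‖μ‖ = 1

theorem isCentral_bot (A : B →L[ℂ] B) : IsCentral A ⊥ where
  finiteDimensional := inferInstance
  map_mem := by simp
  norm_eq_one v hv hv₀ := absurd hv hv₀

namespace IsCentral

/-- The restriction of `A` to the invariant subspace `N`. -/
def restrict (hN : IsCentral A N) : End ℂ N :=
  (A : B →ₗ[ℂ] B).restrict hN.map_mem

@[simp]
theorem coe_restrict_apply (hN : IsCentral A N) (n : N) : (hN.restrict n : B) = A n := rfl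

theorem norm_eq_one_of_hasEigenvalue (hN : IsCentral A N) {μ : ℂ}
    (hμ : hN.restrict.HasEigenvalue μ) : ‖μ‖ = 1 := by
  obtain ⟨v, hv⟩ := hμ.exists_hasEigenvector
  refine hN.norm_eq_one v v.2 (by simpa using hv.2) μ ?_
  simpa using congrArg Subtype.val hv.apply_eq_smul

theorem two_pow_finrank_le (hN : IsCentral A N) :
    (2 : ℕ∞) ^ finrank ℂ N ≤ coveringNumber (1 / 4) (A '' ball 0 1) := by
  have := hN.finiteDimensional
  have hsub : Subtype.val '' (hN.restrict '' ball 0 1) ⊆ A '' ball 0 1 := by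
    rintro _ ⟨_, ⟨x, hx, rfl⟩, rfl⟩
    exact ⟨x, by simpa using hx, rfl⟩
  calc (2 : ℕ∞) ^ finrank ℂ N
    _ ≤ coveringNumber (1 / 2) (hN.restrict '' ball 0 1) :=
      two_pow_finrank_le_coveringNumber fun _ ↦ hN.norm_eq_one_of_hasEigenvalue
    _ = coveringNumber (1 / 2) (Subtype.val '' (hN.restrict '' ball 0 1)) :=
      isometry_subtype_coe.coveringNumber_image.symm
    _ ≤ coveringNumber (1 / 2 / 2) (A '' ball 0 1) := coveringNumber_subset_le hsub
    _ = coveringNumber (1 / 4) (A '' ball 0 1) := by congr 1; rw [div_div]; norm_num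

end IsCentral

theorem exists_maximal_isCentral (hA : IsCompactOperator A) : ∃ N, Maximal (IsCentral A) N := by
  obtain ⟨C, hCA, hfin, hcover⟩ := exists_finite_isCover_of_isCompact_closure (ε := 1 / 4)
    (by norm_num) (hA.isCompact_closure_image_ball (f := (A : B →ₗ[ℂ] B)) 1)
  let s : Set ℕ := (fun N : Submodule ℂ B ↦ finrank ℂ N) '' {N | IsCentral A N}
  have hs : BddAbove s := by
    refine ⟨C.ncard, ?_⟩
    rintro _ ⟨N, hN, rfl⟩
    have h := hN.two_pow_finrank_le.trans (hcover.coveringNumber_le_encard hCA)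
    rw [← hfin.cast_ncard_eq] at h
    exact Nat.lt_two_pow_self.le.trans (by exact_mod_cast h)
  obtain ⟨N, hN, hNs⟩ := Nat.sSup_mem (Set.image_nonempty.2 ⟨⊥, isCentral_bot A⟩) hs
  refine ⟨N, hN, fun N' hN' hle ↦ ?_⟩
  have := hN'.finiteDimensional
  exact (Submodule.eq_of_le_of_finrank_le hle
    ((le_csSup hs ⟨N', hN', rfl⟩).trans_eq hNs.symm)).ge

end Central

section RieszProjection

variable {𝕜 : Type*} [RCLike 𝕜] {B : Type*} [NormedAddCommGroup B] [NormedSpace 𝕜 B]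
  {T : B →L[𝕜] B} {c : 𝕜} {N : Submodule 𝕜 B}

theorem finiteDimensional_ker_of_isCompactOperator_sub
    (hT : IsCompactOperator (T - c • 1 : B →L[𝕜] B)) (hc : c ≠ 0) :
    FiniteDimensional 𝕜 (LinearMap.ker (T : B →ₗ[𝕜] B)) := by
  let K : B →ₗ[𝕜] B := (T - c • 1 : B →L[𝕜] B)
  have hK : ∀ v ∈ LinearMap.ker (T : B →ₗ[𝕜] B), K v = -c • v := fun v hv ↦ by
    simp [K, show T v = 0 from hv]
  have hmaps : ∀ v ∈ LinearMap.ker (T : B →ₗ[𝕜] B), K v ∈ LinearMap.ker (T : B →ₗ[𝕜] B) :=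
    fun v hv ↦ hK v hv ▸ Submodule.smul_mem _ _ hv
  have hid : (-c)⁻¹ • ⇑(K.restrict hmaps) = id := by
    ext v
    simp [hK v v.2, hc]
  exact FiniteDimensional.of_isCompactOperator_id (𝕜 := 𝕜)
    (hid ▸ (IsCompactOperator.restrict (f := K) hT hmaps T.isClosed_ker).smul (-c)⁻¹)

theorem isUnit_of_isCompactOperator_sub [CompleteSpace B]
    (hT : IsCompactOperator (T - c • 1 : B →L[𝕜] B)) (hc : c ≠ 0)
    (hinj : ∀ v, T v = 0 → v = 0) : IsUnit T := by
  rcases hT.hasEigenvalue_or_mem_resolventSet (neg_ne_zero.2 hc) with h | h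
  · obtain ⟨v, hv⟩ := h.exists_hasEigenvector
    have hTv : T v - c • v = -c • v := hv.apply_eq_smul
    exact absurd (hinj v (by simpa using hTv)) hv.2
  · rw [spectrum.mem_resolventSet_iff, ← IsUnit.neg_iff] at h
    convert h using 1
    rw [Algebra.algebraMap_eq_smul_one]
    module

/-- `T + π` acts as the identity on `N = ker T`, so it inverts `T` modulo its kernel. -/
theorem isUnit_add_proj_ker [CompleteSpace B] [FiniteDimensional 𝕜 N]
    (hT : IsCompactOperator (T - c • 1 : B →L[𝕜] B)) (hc : c ≠ 0) (hN : ∀ v, v ∈ N ↔ T v = 0)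
    (hker : ∀ v, T (T v) = 0 → T v = 0) {π : B →L[𝕜] N} (hπ : ∀ n : N, π n = n) :
    IsUnit (T + N.subtypeL.comp π) := by
  refine isUnit_of_isCompactOperator_sub (c := c) ?_ hc fun v hv ↦ ?_
  · have : ProperSpace N := FiniteDimensional.proper_rclike 𝕜 N
    have hid : IsCompactOperator (id : N → N) :=
      isCompactOperator_id_iff_locallyCompactSpace.2 inferInstance
    rw [add_sub_right_comm]
    exact hT.add ((hid.comp_clm π).clm_comp N.subtypeL)
  · have hTv : T v + (π v : B) = 0 := hv
    have hTπ : T (π v) = 0 := (hN _).1 (π v).2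
    have hvN : T v = 0 := hker v (by rw [eq_neg_of_add_eq_zero_left hTv, map_neg, hTπ, neg_zero])
    rw [hvN, zero_add, ZeroMemClass.coe_eq_zero] at hTv
    simpa [hTv] using (congrArg Subtype.val (hπ ⟨v, (hN v).2 hvN⟩)).symm

theorem exists_projection_ker_of_isCompactOperator_sub [CompleteSpace B] [FiniteDimensional 𝕜 N]
    (hT : IsCompactOperator (T - c • 1 : B →L[𝕜] B)) (hc : c ≠ 0) (hN : ∀ v, v ∈ N ↔ T v = 0)
    (hker : ∀ v, T (T v) = 0 → T v = 0) :
    ∃ P : B →L[𝕜] N, (∀ n : N, P n = n) ∧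
      ∀ S : B →L[𝕜] B, Commute S T → ∀ v, (P (S v) : B) = S (P v) := by
  obtain ⟨π, hπ⟩ := Submodule.ClosedComplemented.of_finiteDimensional N
  obtain ⟨u, hu⟩ := isUnit_add_proj_ker hT hc hN hker hπ
  have hTN : ∀ n : N, T n = 0 := fun n ↦ (hN n).1 n.2
  let W : B →L[𝕜] B := (u⁻¹ : (B →L[𝕜] B)ˣ)
  have hleft : ∀ v, W (T v + π v) = v := fun v ↦ by
    simpa [hu] using congr($(u.inv_mul) v)
  have hright : ∀ v, T (W v) + π (W v) = v := fun v ↦ by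
    simpa [hu] using congr($(u.mul_inv) v)
  have hWN : ∀ n : N, W n = n := fun n ↦ by
    simpa [hTN, hπ] using hleft n
  have hWT : ∀ w, π (W (T w)) = 0 := fun w ↦ by
    have hw : W (T w) = w - π w := by simpa [hTN, hπ, hWN] using hleft (w - π w)
    rw [hw, map_sub, hπ, sub_self]
  refine ⟨π.comp W, fun n ↦ by simp [hWN, hπ], fun S hS v ↦ ?_⟩
  have hcomm : ∀ w, S (T w) = T (S w) := fun w ↦ congr($(hS.eq) w)
  have hSN : ∀ n : N, S n ∈ N := fun n ↦ (hN _).2 (by rw [← hcomm, hTN, map_zero])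
  calc (π (W (S v)) : B)
    _ = π (W (T (S (W v)) + S (π (W v)))) := by rw [← hcomm, ← map_add, hright]
    _ = S (π (W v)) := by
      lift S (π (W v)) to N using hSN _ with n
      rw [map_add, map_add, hWT, zero_add, hWN, hπ]

end RieszProjection

section CenterProjection

variable {B : Type*} [NormedAddCommGroup B] [NormedSpace ℂ B] {A : B →L[ℂ] B}
  {N : Submodule ℂ B} {p : ℂ[X]}

theorem aeval_apply_of_intertwining {E : Type*} [AddCommGroup E] [Module ℂ E] {f : End ℂ E}
    {L : E →ₗ[ℂ] B} (h : ∀ x, A (L x) = L (f x)) (p : ℂ[X]) (x : E) :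
    aeval A p (L x) = L (aeval f p x) := by
  induction p using Polynomial.induction_on' with
  | add p q hp hq => simp [hp, hq]
  | monomial n a =>
    have hpow : (A ^ n) (L x) = L ((f ^ n) x) := by
      induction n with
      | zero => simp
      | succ n ih => rw [pow_succ', mul_apply_eq_comp, ih, h, pow_succ', End.mul_apply]
    simp [aeval_monomial, Algebra.algebraMap_eq_smul_one, hpow]

theorem aeval_apply_of_apply_eq_smul {v : B} {μ : ℂ} (h : A v = μ • v) (p : ℂ[X]) :
    aeval A p v = p.eval μ • v := by
  have := aeval_apply_of_intertwining (A := A) (f := algebraMap ℂ (End ℂ ℂ) μ)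
    (L := LinearMap.toSpanSingleton ℂ B v) (fun x ↦ by simp [h, mul_smul, smul_comm x μ]) p 1
  simpa [aeval_algebraMap_apply] using this

theorem isCompactOperator_aeval_sub (hA : IsCompactOperator A) (p : ℂ[X]) :
    IsCompactOperator (aeval A p - p.coeff 0 • 1 : B →L[ℂ] B) := by
  have hp : aeval A p - p.coeff 0 • 1 = A * aeval A p.divX := by
    rw [sub_eq_iff_eq_add, ← Algebra.algebraMap_eq_smul_one]
    calc aeval A p
      _ = aeval A (X * p.divX + C (p.coeff 0)) := by rw [X_mul_divX_add]
      _ = A * aeval A p.divX + algebraMap ℂ (B →L[ℂ] B) (p.coeff 0) := by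
        rw [map_add, map_mul, aeval_X, aeval_C]
  rw [hp]
  exact hA.comp_clm (aeval A p.divX)

theorem coeff_zero_ne_zero_of_norm_roots (hp : ∀ z, p.IsRoot z → ‖z‖ = 1) : p.coeff 0 ≠ 0 := by
  intro h
  simpa using hp 0 (by rwa [IsRoot, ← coeff_zero_eq_eval_zero])

theorem isCentral_ker_aeval (hA : IsCompactOperator A) (hp : ∀ z, p.IsRoot z → ‖z‖ = 1) :
    IsCentral A (LinearMap.ker (aeval A p : B →ₗ[ℂ] B)) where
  finiteDimensional := finiteDimensional_ker_of_isCompactOperator_sub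
    (isCompactOperator_aeval_sub hA p) (coeff_zero_ne_zero_of_norm_roots hp)
  map_mem v hv := by
    have hcomm : aeval A p * A = A * aeval A p := by
      simpa using (Commute.all p X).map (aeval A) |>.eq
    calc aeval A p (A v)
      _ = A (aeval A p v) := congr($hcomm v)
      _ = 0 := by rw [show aeval A p v = 0 from hv, map_zero]
  norm_eq_one v hv hv₀ μ hμ := by
    have : p.eval μ • v = 0 := aeval_apply_of_apply_eq_smul hμ p ▸ hv
    exact hp μ ((smul_eq_zero.1 this).resolve_right hv₀)

theorem IsCentral.exists_le_ker_aeval (hN : IsCentral A N) :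
    ∃ q : ℂ[X], (∀ z, q.IsRoot z → ‖z‖ = 1) ∧ N ≤ LinearMap.ker (aeval A q : B →ₗ[ℂ] B) := by
  have := hN.finiteDimensional
  refine ⟨hN.restrict.charpoly, fun z hz ↦ hN.norm_eq_one_of_hasEigenvalue
    ((End.hasEigenvalue_iff_isRoot_charpoly _ z).2 hz), fun n hn ↦ ?_⟩
  have := aeval_apply_of_intertwining (A := A) (f := hN.restrict) (L := N.subtype)
    (fun _ ↦ rfl) hN.restrict.charpoly ⟨n, hn⟩
  simpa [LinearMap.aeval_self_charpoly] using this

theorem ker_aeval_le_of_maximal (hA : IsCompactOperator A) (hN : Maximal (IsCentral A) N)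
    (hp : ∀ z, p.IsRoot z → ‖z‖ = 1) : LinearMap.ker (aeval A p : B →ₗ[ℂ] B) ≤ N := by
  obtain ⟨q, hq, hNq⟩ := hN.prop.exists_le_ker_aeval
  have hcentral := isCentral_ker_aeval (p := p * q) hA fun z hz ↦ (root_mul.1 hz).elim (hp z) (hq z)
  have hle : N ≤ LinearMap.ker (aeval A (p * q) : B →ₗ[ℂ] B) := fun n hn ↦ by
    have : aeval A q n = 0 := hNq hn
    simp [this]
  refine le_trans (fun v hv ↦ ?_) (hN.2 hcentral hle)
  have : aeval A p v = 0 := hv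
  simp [mul_comm p, this]

/-- `P` is the spectral projection of `A` onto its central subspace `N`, the sum of the generalized
eigenspaces of `A` for the eigenvalues on the unit circle. -/
structure IsCenterProjection (A : B →L[ℂ] B) (P : B →L[ℂ] N) : Prop where
  finiteDimensional : FiniteDimensional ℂ N
  proj_coe : ∀ n : N, P n = n
  comm : ∀ v, (P (A v) : B) = A (P v)
  norm_eq_one : ∀ v ∈ N, v ≠ 0 → ∀ μ : ℂ, A v = μ • v → ‖μ‖ = 1
  mem_of_norm_eq_one : ∀ v, ∀ μ : ℂ, A v = μ • v → ‖μ‖ = 1 → v ∈ N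

theorem exists_isCenterProjection [CompleteSpace B] (hA : IsCompactOperator A) :
    ∃ (N : Submodule ℂ B) (P : B →L[ℂ] N), IsCenterProjection A P := by
  obtain ⟨N, hN⟩ := exists_maximal_isCentral hA
  obtain ⟨q, hq, hNq⟩ := hN.prop.exists_le_ker_aeval
  have := hN.prop.finiteDimensional
  have hmem : ∀ v, v ∈ N ↔ aeval A q v = 0 :=
    fun v ↦ ⟨fun hv ↦ hNq hv, fun hv ↦ ker_aeval_le_of_maximal hA hN hq hv⟩
  have hker : ∀ v, aeval A q (aeval A q v) = 0 → aeval A q v = 0 := fun v hv ↦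
    hNq <| ker_aeval_le_of_maximal (p := q * q) hA hN
      (fun z hz ↦ (root_mul.1 hz).elim (hq z) (hq z)) (by simpa using hv)
  obtain ⟨P, hP, hcomm⟩ := exists_projection_ker_of_isCompactOperator_sub
    (isCompactOperator_aeval_sub hA q) (coeff_zero_ne_zero_of_norm_roots hq) hmem hker
  refine ⟨N, P, hN.prop.finiteDimensional, hP, hcomm A ?_, hN.prop.norm_eq_one, fun v μ hμ hμ₁ ↦ ?_⟩
  · simpa using (Commute.all X q).map (aeval A)
  · refine ker_aeval_le_of_maximal (p := X - C μ) hA hN (fun z hz ↦ ?_) ?_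
    · rwa [root_X_sub_C.1 hz] at hμ₁
    · simp [hμ]

end CenterProjection

section AdaptedSeminorm

variable {E : Type*} [NormedAddCommGroup E] [NormedSpace ℂ E] [CompleteSpace E]
  {A : E →L[ℂ] E} {a : ℝ≥0}

theorem exists_nnnorm_pow_le_of_spectralRadius_lt (h : spectralRadius ℂ A < a) :
    ∃ n, 0 < n ∧ ‖A ^ n‖₊ ≤ a ^ n := by
  obtain ⟨n, hlt, hn⟩ := (((spectrum.pow_nnnorm_pow_one_div_tendsto_nhds_spectralRadius
    A).eventually_lt_const h).and (eventually_gt_atTop 0)).exists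
  refine ⟨n, hn, ?_⟩
  rw [one_div, ENNReal.rpow_inv_lt_iff (by positivity), ENNReal.rpow_natCast] at hlt
  exact_mod_cast hlt.le

theorem exists_adapted_seminorm (h : spectralRadius ℂ A < a) :
    ∃ γ : Seminorm ℂ E, Continuous γ ∧ (∀ x, ‖x‖ ≤ γ x) ∧ ∀ x, γ (A x) ≤ a * γ x := by
  obtain ⟨n, hn, hle⟩ := exists_nnnorm_pow_le_of_spectralRadius_lt h
  have ha : 0 < a := by simpa using h.bot_lt
  let F (x : E) (k : ℕ) : ℝ := (a⁻¹ : ℝ) ^ k * ‖(A ^ k) x‖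
  let γ : Seminorm ℂ E :=
    ∑ k ∈ Finset.range n, a⁻¹ ^ k • (normSeminorm ℂ E).comp (A ^ k).toLinearMap
  have hγ : ∀ x, γ x = ∑ k ∈ Finset.range n, F x k := fun x ↦ by
    simp [γ, F, NNReal.smul_def, -ContinuousLinearMap.toLinearMap_pow]
  refine ⟨γ, ?_, fun x ↦ ?_, fun x ↦ ?_⟩
  · rw [show ⇑γ = _ from funext hγ]
    fun_prop
  · calc ‖x‖
      _ = F x 0 := by simp [F]
      _ ≤ γ x := hγ x ▸ Finset.single_le_sum (fun k _ ↦ by positivity) (Finset.mem_range.2 hn)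
  · have hFA : ∀ k, F (A x) k = a * F x (k + 1) := fun k ↦ by
      simp only [F, pow_succ, mul_apply_eq_comp]
      field_simp
    have hFn : F x n ≤ F x 0 := by
      have : ‖(A ^ n) x‖ ≤ a ^ n * ‖x‖ := (A ^ n).le_of_opNorm_le hle x
      simpa [F, inv_mul_le_iff₀, ha]
    calc γ (A x)
      _ = a * ∑ k ∈ Finset.range n, F x (k + 1) := by simp_rw [hγ, hFA, Finset.mul_sum]
      _ ≤ a * γ x := by
        have := (Finset.sum_range_succ' (F x) n).symm.trans (Finset.sum_range_succ (F x) n)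
        gcongr
        linarith [hγ x]

theorem spectralRadius_lt_of_forall_norm_lt (ha : 0 < a) (h : ∀ z ∈ spectrum ℂ A, ‖z‖ < a) :
    spectralRadius ℂ A < a := by
  cases subsingleton_or_nontrivial E
  · simpa [spectralRadius, Subsingleton.elim A 0] using ha
  · exact spectrum.spectralRadius_lt_of_forall_lt A h

end AdaptedSeminorm

namespace IsCenterProjection

variable {B : Type*} [NormedAddCommGroup B] [NormedSpace ℂ B] {A : B →L[ℂ] B}
  {N : Submodule ℂ B} {P : B →L[ℂ] N}

theorem proj_apply_coe (hP : IsCenterProjection A P) (n : N) : (P (A n) : B) = A n := by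
  rw [hP.comm, hP.proj_coe]

theorem exists_leftInverse (hP : IsCenterProjection A P) :
    ∃ g : N →L[ℂ] N, (∀ n : N, g (P (A n)) = n) ∧ ∀ z ∈ spectrum ℂ g, ‖z‖ = 1 := by
  have := hP.finiteDimensional
  have : CompleteSpace N := FiniteDimensional.complete ℂ N
  let f : N →L[ℂ] N := P.comp (A.comp N.subtypeL)
  have hf : ∀ n, (f n : B) = A n := hP.proj_apply_coe
  have heigen : ∀ (n : N) (μ : ℂ), n ≠ 0 → f n = μ • n → ‖μ‖ = 1 := fun n μ hn hμ ↦
    hP.norm_eq_one n n.2 (by simpa using hn) μ (by simpa [hf] using congrArg Subtype.val hμ)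
  have hinj : Function.Injective f := (injective_iff_map_eq_zero f).2 fun n hn ↦ by
    by_contra hn₀
    simpa using heigen n 0 hn₀ (by simpa using hn)
  obtain ⟨u, hu⟩ := ContinuousLinearMap.isUnit_iff_bijective.2
    ⟨hinj, LinearMap.surjective_of_injective (f := (f : N →ₗ[ℂ] N)) hinj⟩
  refine ⟨(u⁻¹ : (N →L[ℂ] N)ˣ), fun n ↦ ?_, fun z hz ↦ ?_⟩
  · simpa [hu, f] using congr($(u.inv_mul) n)
  · have hinv : z⁻¹ ∈ spectrum ℂ f := hu ▸ spectrum.inv₀_mem_iff.2 hz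
    rw [ContinuousLinearMap.spectrum_eq, ← End.hasEigenvalue_iff_mem_spectrum] at hinv
    obtain ⟨n, hn⟩ := hinv.exists_hasEigenvector
    simpa using heigen n _ hn.2 hn.apply_eq_smul

theorem exists_center_seminorm (hP : IsCenterProjection A P) {κ : ℝ} (hκ₀ : 0 < κ) (hκ : κ < 1) :
    ∃ α : Seminorm ℂ B, Continuous α ∧ (∀ v, α (P v) = α v) ∧ (∀ v, ‖P v‖ ≤ α v) ∧
      ∀ v, κ * α v ≤ α (A v) := by
  obtain ⟨g, hg, hspec⟩ := hP.exists_leftInverse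
  have := hP.finiteDimensional
  have : CompleteSpace N := FiniteDimensional.complete ℂ N
  lift κ to ℝ≥0 using hκ₀.le
  have hκ' : (1 : ℝ) < (κ⁻¹ : ℝ≥0) := by exact_mod_cast (one_lt_inv₀ hκ₀).2 hκ
  obtain ⟨γ, hγ, hnorm, hγg⟩ := exists_adapted_seminorm (A := g) (a := κ⁻¹)
    (spectralRadius_lt_of_forall_norm_lt (inv_pos.2 (by exact_mod_cast hκ₀))
      fun z hz ↦ hspec z hz ▸ hκ')
  refine ⟨γ.comp (P : B →ₗ[ℂ] N), hγ.comp P.continuous, fun v ↦ ?_, fun v ↦ hnorm (P v), fun v ↦ ?_⟩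
  · simp [hP.proj_coe]
  · have hPA : P (A (P v)) = P (A v) := Subtype.ext <| by rw [hP.proj_apply_coe, hP.comm]
    have := hγg (P (A v))
    rw [← hPA, hg, NNReal.coe_inv, ← div_eq_inv_mul, le_div_iff₀' hκ₀, hPA] at this
    exact this

theorem norm_lt_one_of_mem_spectrum (hP : IsCenterProjection A P) [CompleteSpace B]
    (hA : IsCompactOperator A) (hspec : spectrum ℂ A ⊆ closedBall 0 1)
    {z : ℂ} (hz : z ∈ spectrum ℂ (A - A.comp (N.subtypeL.comp P))) : ‖z‖ < 1 := by
  rcases eq_or_ne z 0 with rfl | hz₀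
  · simp
  have hcpt : IsCompactOperator (A - A.comp (N.subtypeL.comp P) : B →L[ℂ] B) :=
    hA.sub (hA.comp_clm _)
  obtain ⟨v, hv⟩ := ((hcpt.hasEigenvalue_iff_mem_spectrum hz₀).2 hz).exists_hasEigenvector
  have hAv : A v - A (P v) = z • v := hv.apply_eq_smul
  have hPv : P v = 0 := by
    have : (P (z • v) : B) = 0 := by
      rw [← hAv, map_sub, Submodule.coe_sub, hP.comm, hP.proj_apply_coe, sub_self]
    simpa [hz₀] using this
  rw [hPv, ZeroMemClass.coe_zero, map_zero, sub_zero] at hAv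
  have hzA : z ∈ spectrum ℂ A := (hA.hasEigenvalue_iff_mem_spectrum hz₀).1
    (End.hasEigenvalue_of_hasEigenvector (x := v) ⟨End.mem_eigenspace_iff.2 hAv, hv.2⟩)
  refine lt_of_le_of_ne (by simpa using hspec hzA) fun hz₁ ↦ hv.2 ?_
  have := congrArg Subtype.val (hP.proj_coe ⟨v, hP.mem_of_norm_eq_one v z hAv hz₁⟩)
  simpa [hPv] using this.symm

theorem exists_stable_seminorm (hP : IsCenterProjection A P) [CompleteSpace B]
    (hA : IsCompactOperator A) (hspec : spectrum ℂ A ⊆ closedBall 0 1) :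
    ∃ θ : ℝ, 0 ≤ θ ∧ θ < 1 ∧ ∃ β : Seminorm ℂ B, Continuous β ∧ (∀ n : N, β n = 0) ∧
      (∀ v, ‖v - P v‖ ≤ β v) ∧ ∀ v, β (A v) ≤ θ * β v := by
  let S : B →L[ℂ] B := A - A.comp (N.subtypeL.comp P)
  have hS : ∀ v, S (v - P v) = A v - P (A v) := fun v ↦ by
    simp [S, hP.comm, hP.proj_coe]
  have hlt : spectralRadius ℂ S < (1 : ℝ≥0) := spectralRadius_lt_of_forall_norm_lt one_pos
    fun z hz ↦ hP.norm_lt_one_of_mem_spectrum hA hspec hz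
  obtain ⟨θ, hθ, hθ₁⟩ := ENNReal.lt_iff_exists_nnreal_btwn.1 hlt
  obtain ⟨γ, hγ, hnorm, hγS⟩ := exists_adapted_seminorm hθ
  let L : B →L[ℂ] B := 1 - N.subtypeL.comp P
  refine ⟨θ, θ.2, by exact_mod_cast hθ₁, γ.comp (L : B →ₗ[ℂ] B), hγ.comp L.continuous, fun n ↦ ?_,
    fun v ↦ hnorm (L v), fun v ↦ ?_⟩
  · simp [L, hP.proj_coe]
  · simpa [L, hS] using hγS (v - P v)

theorem exists_eigenvector (hP : IsCenterProjection A P) [CompleteSpace B]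
    (hA : IsCompactOperator A) (h : (spectrum ℂ A ∩ sphere 0 1).Nonempty) :
    ∃ (e : N) (μ : ℂ), e ≠ 0 ∧ ‖μ‖ = 1 ∧ A e = μ • (e : B) := by
  obtain ⟨μ, hμA, hμ⟩ := h
  rw [mem_sphere_zero_iff_norm] at hμ
  have hμ₀ : μ ≠ 0 := norm_ne_zero_iff.1 (hμ ▸ one_ne_zero)
  obtain ⟨v, hv⟩ := ((hA.hasEigenvalue_iff_mem_spectrum hμ₀).2 hμA).exists_hasEigenvector
  exact ⟨⟨v, hP.mem_of_norm_eq_one v μ hv.apply_eq_smul hμ⟩, μ, by simpa using hv.2, hμ,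
    hv.apply_eq_smul⟩

end IsCenterProjection

section SeminormEstimates

variable {𝕜 : Type*} [NontriviallyNormedField 𝕜] {E : Type*} [NormedAddCommGroup E]
  [NormedSpace 𝕜 E] {R : E → E} {A : E →L[𝕜] E} {x : E} {α β γ : Seminorm 𝕜 E} {ε θ κ κ' M : ℝ}

theorem eventually_seminorm_sub_sub_le (hR : HasStrictFDerivAt R A x) (hγ : Continuous γ)
    (hε : 0 < ε) :
    ∀ᶠ p in 𝓝 (x, x), γ (R p.1 - R p.2 - A (p.1 - p.2)) ≤ ε * ‖p.1 - p.2‖ := by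
  obtain ⟨C, hC, hbound⟩ := Seminorm.bound_of_continuous_normedSpace γ hγ
  filter_upwards [hR.isLittleO.def (div_pos hε hC)] with p hp
  calc γ (R p.1 - R p.2 - A (p.1 - p.2))
    _ ≤ C * ‖R p.1 - R p.2 - A (p.1 - p.2)‖ := hbound _
    _ ≤ C * (ε / C * ‖p.1 - p.2‖) := by gcongr
    _ = ε * ‖p.1 - p.2‖ := by field_simp

theorem eventually_mul_seminorm_le (hR : HasStrictFDerivAt R A x) (hγ : Continuous γ)
    (hγA : ∀ v, κ' * γ v ≤ γ (A v)) (hκ : κ < κ') (hM : 0 < M) :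
    ∀ᶠ p in 𝓝 (x, x), ‖p.1 - p.2‖ ≤ M * γ (p.1 - p.2) →
      κ * γ (p.1 - p.2) ≤ γ (R p.1 - R p.2) := by
  filter_upwards [eventually_seminorm_sub_sub_le hR hγ (div_pos (sub_pos.2 hκ) hM)] with p hp hle
  have hsmall : γ (R p.1 - R p.2 - A (p.1 - p.2)) ≤ (κ' - κ) * γ (p.1 - p.2) :=
    calc γ (R p.1 - R p.2 - A (p.1 - p.2))
      _ ≤ (κ' - κ) / M * (M * γ (p.1 - p.2)) := hp.trans (by have := sub_pos.2 hκ; gcongr)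
      _ = (κ' - κ) * γ (p.1 - p.2) := by field_simp
  have htri := map_sub_le_add γ (R p.1 - R p.2) (R p.1 - R p.2 - A (p.1 - p.2))
  rw [sub_sub_cancel] at htri
  linarith [hγA (p.1 - p.2)]

theorem eventually_seminorm_sub_le_mul (hR : HasStrictFDerivAt R A x) (hβ : Continuous β)
    (hβA : ∀ v, β (A v) ≤ θ * β v) (hθ₀ : 0 ≤ θ) (hθ : θ < κ) (hM : 0 < M) :
    ∀ᶠ p in 𝓝 (x, x), ‖p.1 - p.2‖ ≤ M * α (p.1 - p.2) → β (p.1 - p.2) ≤ α (p.1 - p.2) →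
      β (R p.1 - R p.2) ≤ κ * α (p.1 - p.2) := by
  filter_upwards [eventually_seminorm_sub_sub_le hR hβ (div_pos (sub_pos.2 hθ) hM)]
    with p hp hle hcone
  calc β (R p.1 - R p.2)
    _ = β (A (p.1 - p.2) + (R p.1 - R p.2 - A (p.1 - p.2))) := by rw [add_sub_cancel]
    _ ≤ β (A (p.1 - p.2)) + β (R p.1 - R p.2 - A (p.1 - p.2)) := map_add_le_add β _ _
    _ ≤ θ * α (p.1 - p.2) + (κ - θ) / M * (M * α (p.1 - p.2)) := by
      have := sub_pos.2 hθ
      gcongr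
      · exact (hβA _).trans (by gcongr)
      · exact hp.trans (by gcongr)
    _ = κ * α (p.1 - p.2) := by field_simp; ring

end SeminormEstimates

section Survivors

variable {X : Type*} {R : X → X} {W W' : Set X} {k m n : ℕ} {x : X}

/-- The points whose orbit segment of length `m`, starting with the point itself, stays in `W`. -/
def survivors (R : X → X) (W : Set X) (m : ℕ) : Set X :=
  {x | ∀ j < m, R^[j] x ∈ W}

@[simp]
theorem survivors_zero : survivors R W 0 = Set.univ := by
  simp [survivors]

theorem survivors_antitone : Antitone (survivors R W) :=
  fun _ _ h _ hx j hj ↦ hx j (hj.trans_le h)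

theorem survivors_mono (h : W ⊆ W') : survivors R W m ⊆ survivors R W' m :=
  fun _ hx j hj ↦ h (hx j hj)

theorem survivors_succ : survivors R W (m + 1) = W ∩ R ⁻¹' survivors R W m := by
  ext x
  refine ⟨fun h ↦ ⟨h 0 m.succ_pos, fun j hj ↦ h (j + 1) (by lia)⟩, ?_⟩
  rintro ⟨h₀, h⟩ (_ | j) hj
  exacts [h₀, h j (by lia)]

theorem iterate_mem_survivors (hx : x ∈ survivors R W (m + k)) : R^[k] x ∈ survivors R W m :=
  fun j hj ↦ by
    rw [← Function.iterate_add_apply]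
    exact hx _ (by lia)

theorem isOpen_survivors [TopologicalSpace X] (hW : IsOpen W) (hR : ContinuousOn R W) (m : ℕ) :
    IsOpen (survivors R W m) := by
  induction m with
  | zero => simp
  | succ m ih => exact survivors_succ ▸ hR.isOpen_inter_preimage hW ih

theorem isClosed_survivors [TopologicalSpace X] (hW : IsClosed W) (hR : ContinuousOn R W) (m : ℕ) :
    IsClosed (survivors R W m) := by
  induction m with
  | zero => simp
  | succ m ih => exact survivors_succ ▸ hR.preimage_isClosed_of_isClosed hW ih

theorem exists_forall_iterate_mem [TopologicalSpace X] [T2Space X] {K : Set X} (hK : IsCompact K)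
    (hW : IsClosed W) (hR : ContinuousOn R W) (h : ∀ m, (K ∩ survivors R W m).Nonempty) :
    ∃ x ∈ K, ∀ m, R^[m] x ∈ W := by
  have hclosed := isClosed_survivors hW hR
  obtain ⟨x, hx⟩ := IsCompact.nonempty_iInter_of_sequence_nonempty_isCompact_isClosed
    (fun m ↦ K ∩ survivors R W m)
    (fun m ↦ Set.inter_subset_inter_right K (survivors_antitone m.le_succ)) h
    (hK.inter_right (hclosed 0)) fun m ↦ hK.isClosed.inter (hclosed m)
  rw [Set.mem_iInter] at hx
  exact ⟨x, (hx 0).1, fun m ↦ (hx (m + 1)).2 m m.lt_succ_self⟩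

theorem analyticAt_iterate {𝕜 : Type*} [NontriviallyNormedField 𝕜] {E : Type*}
    [NormedAddCommGroup E] [NormedSpace 𝕜 E] {R : E → E} {W : Set E}
    (hR : ∀ x ∈ W, AnalyticAt 𝕜 R x) {x : E} (hx : x ∈ survivors R W m) :
    AnalyticAt 𝕜 R^[m] x := by
  induction m generalizing x with
  | zero => exact analyticAt_id
  | succ m ih =>
    rw [survivors_succ] at hx
    rw [Function.iterate_succ]
    exact (ih hx.2).comp (hR x hx.1)

end Survivors

section Cone

variable {𝕜 : Type*} [NontriviallyNormedField 𝕜] {E : Type*} [NormedAddCommGroup E]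
  [NormedSpace 𝕜 E] {R : E → E} {A : E →L[𝕜] E} {α β : Seminorm 𝕜 E} {W W' : Set E} {x p q : E}
  {M θ κ κ' : ℝ}

/-- On `W`, the map `R` preserves the relation `p - q ∈ {v | β v ≤ α v}` and expands such
differences by a factor of at least `κ`, as measured by `α`. -/
def ConeExpandingOn (R : E → E) (α β : Seminorm 𝕜 E) (κ : ℝ) (W : Set E) : Prop :=
  ∀ p ∈ W, ∀ q ∈ W, β (p - q) ≤ α (p - q) →
    β (R p - R q) ≤ α (R p - R q) ∧ κ * α (p - q) ≤ α (R p - R q)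

theorem exists_coneExpandingOn (hR : HasStrictFDerivAt R A x) (hα : Continuous α)
    (hβ : Continuous β) (hM : 0 < M) (hnorm : ∀ v, β v ≤ α v → ‖v‖ ≤ M * α v)
    (hαA : ∀ v, κ' * α v ≤ α (A v)) (hβA : ∀ v, β (A v) ≤ θ * β v) (hθ₀ : 0 ≤ θ) (hθ : θ < κ)
    (hκ : κ < κ') : ∃ W ∈ 𝓝 x, ConeExpandingOn R α β κ W := by
  have hev : ∀ᶠ p in 𝓝 (x, x), β (p.1 - p.2) ≤ α (p.1 - p.2) →
      β (R p.1 - R p.2) ≤ α (R p.1 - R p.2) ∧ κ * α (p.1 - p.2) ≤ α (R p.1 - R p.2) := by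
    filter_upwards [eventually_mul_seminorm_le hR hα hαA hκ hM,
      eventually_seminorm_sub_le_mul (α := α) hR hβ hβA hθ₀ hθ hM] with p hlow hup hcone
    have hlow := hlow (hnorm _ hcone)
    exact ⟨(hup (hnorm _ hcone) hcone).trans hlow, hlow⟩
  rw [nhds_prod_eq] at hev
  obtain ⟨W, hW, hsub⟩ := mem_prod_same_iff.1 hev
  exact ⟨W, hW, fun p hp q hq ↦ hsub (Set.mk_mem_prod hp hq)⟩

namespace ConeExpandingOn

theorem mono (h : ConeExpandingOn R α β κ W) (hW : W' ⊆ W) : ConeExpandingOn R α β κ W' :=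
  fun p hp q hq ↦ h p (hW hp) q (hW hq)

theorem iterate_sub (h : ConeExpandingOn R α β κ W) (hκ : 0 ≤ κ) {m : ℕ}
    (hp : p ∈ survivors R W m) (hq : q ∈ survivors R W m) (hpq : β (p - q) ≤ α (p - q)) :
    β (R^[m] p - R^[m] q) ≤ α (R^[m] p - R^[m] q) ∧
      κ ^ m * α (p - q) ≤ α (R^[m] p - R^[m] q) := by
  induction m generalizing p q with
  | zero => simpa using hpq
  | succ m ih =>
    rw [survivors_succ] at hp hq
    obtain ⟨hcone, hexp⟩ := h p hp.1 q hq.1 hpq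
    obtain ⟨hcone', hexp'⟩ := ih hp.2 hq.2 hcone
    refine ⟨hcone', ?_⟩
    calc κ ^ (m + 1) * α (p - q)
      _ = κ ^ m * (κ * α (p - q)) := by ring
      _ ≤ κ ^ m * α (R p - R q) := by gcongr
      _ ≤ α (R^[m + 1] p - R^[m + 1] q) := hexp'

theorem iterate (h : ConeExpandingOn R α β κ W) (hκ : 0 ≤ κ) (h₀ : 0 ∈ W) (hR : R 0 = 0) {m : ℕ}
    (hp : p ∈ survivors R W m) (hpc : β p ≤ α p) :
    β (R^[m] p) ≤ α (R^[m] p) ∧ κ ^ m * α p ≤ α (R^[m] p) := by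
  have hfix : ∀ j, R^[j] 0 = 0 := Function.iterate_fixed hR
  simpa [hfix] using h.iterate_sub hκ hp (q := 0) (fun j _ ↦ by rwa [hfix]) (by simpa using hpc)

end ConeExpandingOn

end Cone

section Antilipschitz

variable {E F : Type*} [NormedAddCommGroup E] [NormedAddCommGroup F] {Φ : E → F} {Ω : Set E}
  {c : ℝ}

theorem injOn_of_mul_norm_sub_le (hc : 0 < c)
    (hanti : ∀ x ∈ Ω, ∀ y ∈ Ω, c * ‖x - y‖ ≤ ‖Φ x - Φ y‖) : Set.InjOn Φ Ω := by
  intro x hx y hy hxy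
  have hle := hanti x hx y hy
  rw [hxy, sub_self, norm_zero] at hle
  exact sub_eq_zero.1 (norm_le_zero_iff.1 (nonpos_of_mul_nonpos_right hle hc))

theorem continuousOn_invFunOn_image (hc : 0 < c)
    (hanti : ∀ x ∈ Ω, ∀ y ∈ Ω, c * ‖x - y‖ ≤ ‖Φ x - Φ y‖) :
    ContinuousOn (Function.invFunOn Φ Ω) (Φ '' Ω) := by
  have hinv := (injOn_of_mul_norm_sub_le hc hanti).leftInvOn_invFunOn
  refine (LipschitzOnWith.of_dist_le_mul (K := c⁻¹.toNNReal) ?_).continuousOn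
  rintro _ ⟨x, hx, rfl⟩ _ ⟨y, hy, rfl⟩
  rw [hinv hx, hinv hy, dist_eq_norm, dist_eq_norm,
    Real.coe_toNNReal _ (inv_pos.2 hc).le, le_inv_mul_iff₀ hc]
  exact hanti x hx y hy

end Antilipschitz

section InverseBranch

theorem mul_norm_le_norm_apply_of_hasFDerivAt {𝕜 E F : Type*} [NontriviallyNormedField 𝕜]
    [NormedAddCommGroup E] [NormedSpace 𝕜 E] [NormedAddCommGroup F] [NormedSpace 𝕜 F]
    {f : E → F} {L : E →L[𝕜] F} {x : E} {c : ℝ} (hf : HasFDerivAt f L x)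
    (h : ∀ᶠ y in 𝓝 x, c * ‖y - x‖ ≤ ‖f y - f x‖) (v : E) : c * ‖v‖ ≤ ‖L v‖ := by
  have hslope := (hf.hasLineDerivAt v).tendsto_slope_zero.norm
  have hline : Tendsto (fun t : 𝕜 ↦ x + t • v) (𝓝[≠] 0) (𝓝 x) :=
    ((by fun_prop : Continuous fun t : 𝕜 ↦ x + t • v).tendsto' 0 x (by simp)).mono_left
      nhdsWithin_le_nhds
  refine ge_of_tendsto hslope ?_
  filter_upwards [hline.eventually h, self_mem_nhdsWithin] with t ht ht₀
  rw [add_sub_cancel_left, norm_smul] at ht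
  rw [norm_smul, norm_inv, le_inv_mul_iff₀ (norm_pos_iff.2 ht₀)]
  linarith

variable {E : Type*} [NormedAddCommGroup E] [NormedSpace ℂ E] [FiniteDimensional ℂ E]
  {Φ : E → E} {Ω : Set E} {c : ℝ} {x : E}

theorem exists_equiv_hasStrictFDerivAt (hΩ : IsOpen Ω) (hΦ : AnalyticOnNhd ℂ Φ Ω) (hc : 0 < c)
    (hanti : ∀ x ∈ Ω, ∀ y ∈ Ω, c * ‖x - y‖ ≤ ‖Φ x - Φ y‖) (hx : x ∈ Ω) :
    ∃ L : E ≃L[ℂ] E, HasStrictFDerivAt Φ (L : E →L[ℂ] E) x := by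
  have hstrict := (hΦ x hx).hasStrictFDerivAt
  have hlower := mul_norm_le_norm_apply_of_hasFDerivAt hstrict.hasFDerivAt
    (by filter_upwards [hΩ.mem_nhds hx] with y hy using hanti y hy x hx)
  have hinj : Function.Injective (fderiv ℂ Φ x) := by
    rw [injective_iff_map_eq_zero]
    intro v hv
    have hle := hlower v
    rw [hv, norm_zero] at hle
    exact norm_le_zero_iff.1 (nonpos_of_mul_nonpos_right hle hc)
  exact ⟨(LinearEquiv.ofInjectiveEndo (fderiv ℂ Φ x : E →ₗ[ℂ] E) hinj).toContinuousLinearEquiv,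
    hstrict⟩

theorem isOpen_image_of_analyticOnNhd (hΩ : IsOpen Ω) (hΦ : AnalyticOnNhd ℂ Φ Ω) (hc : 0 < c)
    (hanti : ∀ x ∈ Ω, ∀ y ∈ Ω, c * ‖x - y‖ ≤ ‖Φ x - Φ y‖) : IsOpen (Φ '' Ω) := by
  rw [isOpen_iff_mem_nhds]
  rintro _ ⟨x, hx, rfl⟩
  obtain ⟨L, hL⟩ := exists_equiv_hasStrictFDerivAt hΩ hΦ hc hanti hx
  rw [← hL.map_nhds_eq_of_equiv]
  exact image_mem_map (hΩ.mem_nhds hx)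

theorem exists_hasFDerivAt_invFunOn (hΩ : IsOpen Ω) (hΦ : AnalyticOnNhd ℂ Φ Ω) (hc : 0 < c)
    (hanti : ∀ x ∈ Ω, ∀ y ∈ Ω, c * ‖x - y‖ ≤ ‖Φ x - Φ y‖) (hx : x ∈ Ω) :
    ∃ L : E ≃L[ℂ] E, HasFDerivAt Φ (L : E →L[ℂ] E) x ∧
      HasFDerivAt (Function.invFunOn Φ Ω) (L.symm : E →L[ℂ] E) (Φ x) := by
  obtain ⟨L, hL⟩ := exists_equiv_hasStrictFDerivAt hΩ hΦ hc hanti hx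
  have himage := (isOpen_image_of_analyticOnNhd hΩ hΦ hc hanti).mem_nhds (Set.mem_image_of_mem Φ hx)
  refine ⟨L, hL.hasFDerivAt, HasFDerivAt.of_local_left_inverse (f := Φ)
    ((continuousOn_invFunOn_image hc hanti).continuousAt himage) ?_ ?_⟩
  · rw [(injOn_of_mul_norm_sub_le hc hanti).leftInvOn_invFunOn hx]
    exact hL.hasFDerivAt
  · filter_upwards [himage] with y hy using Function.invFunOn_eq hy

theorem smul_mem_image_of_isOpen_image {e : E} {t : ℝ} (hopen : IsOpen (Φ '' Ω))
    (hbdd : Bornology.IsBounded Ω) (hcont : ContinuousOn Φ (closure Ω)) (h₀ : 0 ∈ Φ '' Ω)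
    (hproper : ∀ x ∈ closure Ω, ∀ z : ℂ, ‖z‖ < t → Φ x = z • e → x ∈ Ω) {z : ℂ} (hz : ‖z‖ < t) :
    z • e ∈ Φ '' Ω := by
  have : ProperSpace E := FiniteDimensional.proper_rclike ℂ E
  have hclosure : closure (Φ '' Ω) ⊆ Φ '' closure Ω :=
    closure_minimal (Set.image_mono subset_closure)
      (hbdd.isCompact_closure.image_of_continuousOn hcont).isClosed
  have hsmul : Continuous fun z : ℂ ↦ z • e := by fun_prop
  have hsub : ball (0 : ℂ) t ⊆ (fun z : ℂ ↦ z • e) ⁻¹' (Φ '' Ω) := by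
    refine (convex_ball (0 : ℂ) t).isPreconnected.subset_of_closure_inter_subset
      (hopen.preimage hsmul) ⟨0, ?_, by simpa using h₀⟩ ?_
    · simpa using (norm_nonneg z).trans_lt hz
    · rintro w ⟨hw, hwt⟩
      obtain ⟨x, hx, hxw⟩ := hclosure (hsmul.closure_preimage_subset _ hw)
      exact ⟨x, hproper x hx w (by simpa using hwt) hxw, hxw⟩
  exact hsub (by simpa using hz)

theorem mul_norm_le_of_inverse_branch {e : E} {μ : ℂ} {t ρ : ℝ} {A : E →L[ℂ] E} (hΩ : IsOpen Ω)
    (h₀ : 0 ∈ Ω) (hΦ : AnalyticOnNhd ℂ Φ Ω) (hcont : ContinuousOn Φ (closure Ω)) (hc : 0 < c)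
    (hanti : ∀ x ∈ Ω, ∀ y ∈ Ω, c * ‖x - y‖ ≤ ‖Φ x - Φ y‖) (hΦ₀ : Φ 0 = 0)
    (hA : HasFDerivAt Φ A 0) (hAe : A e = μ • e) (hμ : ‖μ‖ = 1) (ht : 0 < t)
    (hproper : ∀ x ∈ closure Ω, ∀ z : ℂ, ‖z‖ < t → Φ x = z • e → x ∈ Ω)
    (hρ : ∀ x ∈ Ω, ‖x‖ ≤ ρ) : t * ‖e‖ ≤ ρ := by
  set g := Function.invFunOn Φ Ω
  have hline : ∀ z ∈ ball (0 : ℂ) t, z • e ∈ Φ '' Ω := fun z hz ↦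
    smul_mem_image_of_isOpen_image (isOpen_image_of_analyticOnNhd hΩ hΦ hc hanti)
      (isBounded_iff_forall_norm_le.2 ⟨ρ, hρ⟩) hcont ⟨0, h₀, hΦ₀⟩ hproper (by simpa using hz)
  have hg₀ : g 0 = 0 := by
    simpa [hΦ₀] using (injOn_of_mul_norm_sub_le hc hanti).leftInvOn_invFunOn h₀
  have hsmul (z : ℂ) : HasDerivAt (fun z : ℂ ↦ z • e) e z := by
    simpa using (hasDerivAt_id z).smul_const e
  have hdiff : DifferentiableOn ℂ (g ∘ fun z : ℂ ↦ z • e) (ball 0 t) := by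
    intro z hz
    obtain ⟨x, hx, hxz⟩ := hline z hz
    obtain ⟨L, -, hL⟩ := exists_hasFDerivAt_invFunOn hΩ hΦ hc hanti hx
    rw [hxz] at hL
    exact (hL.comp_hasDerivAt z (hsmul z)).differentiableAt.differentiableWithinAt
  have hderiv : ‖deriv (g ∘ fun z : ℂ ↦ z • e) 0‖ = ‖e‖ := by
    obtain ⟨L, hL, hLg⟩ := exists_hasFDerivAt_invFunOn hΩ hΦ hc hanti h₀
    rw [hΦ₀, ← zero_smul ℂ e] at hLg
    rw [(hLg.comp_hasDerivAt (0 : ℂ) (hsmul 0)).deriv]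
    have hLe : e = μ • L.symm e := by
      rw [← map_smul, ← hAe, ← hL.unique hA]
      exact (L.symm_apply_apply e).symm
    simpa [norm_smul, hμ] using congrArg norm hLe.symm
  have hmaps : Set.MapsTo (g ∘ fun z : ℂ ↦ z • e) (ball 0 t) (closedBall (g ((0 : ℂ) • e)) ρ) := by
    intro z hz
    simpa [hg₀] using hρ _ (Function.invFunOn_mem (hline z hz))
  have hschwarz := Complex.norm_deriv_le_div_of_mapsTo_ball hdiff hmaps ht
  rwa [hderiv, le_div_iff₀ ht, mul_comm] at hschwarz

end InverseBranch

section LocalConeMap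

variable {B : Type*} [NormedAddCommGroup B] [NormedSpace ℂ B] {N : Submodule ℂ B} {P : B →L[ℂ] N}
  {A : B →L[ℂ] B} {R : B → B} {α β : Seminorm ℂ B} {V K Q : Set B} {κ r c t : ℝ} {p : B} {e : N}
  {μ : ℂ} {m n : ℕ}

theorem hasFDerivAt_proj_iterate (hA : HasFDerivAt R A 0) (hR : R 0 = 0) (m : ℕ) :
    HasFDerivAt (fun y : N ↦ P (R^[m] y)) (P ∘L (A ^ m) ∘L N.subtypeL) 0 :=
  P.hasFDerivAt.comp 0 <| HasFDerivAt.comp (g := R^[m]) (0 : N) (hA.iterate hR m)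
    N.subtypeL.hasFDerivAt

/-- `P` is a projection onto the finite-dimensional subspace `N`, and the continuous seminorms `α`
and `β` measure the components of a vector in `N` and in the complement `ker P`. -/
structure IsAdaptedPair (P : B →L[ℂ] N) (α β : Seminorm ℂ B) : Prop where
  finiteDimensional : FiniteDimensional ℂ N
  proj_coe : ∀ n : N, P n = n
  continuous_left : Continuous α
  continuous_right : Continuous β
  left_proj : ∀ v, α (P v) = α v
  right_coe : ∀ n : N, β n = 0
  norm_le : ∀ v, ‖v‖ ≤ α v + β v

namespace IsAdaptedPair

theorem norm_coe_le (h : IsAdaptedPair P α β) (x : N) : ‖x‖ ≤ α x := by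
  simpa [h.right_coe] using h.norm_le x

theorem exists_closedBall_subset (h : IsAdaptedPair P α β) (hV : V ∈ 𝓝 0) :
    ∃ r > 0, (α ⊔ β).closedBall 0 r ⊆ V := by
  obtain ⟨ε, hε, hεV⟩ := nhds_basis_closedBall.mem_iff.1 hV
  refine ⟨ε / 2, half_pos hε, fun v hv ↦ hεV ?_⟩
  rw [Seminorm.mem_closedBall_zero, Seminorm.sup_apply, max_le_iff] at hv
  rw [mem_closedBall_zero_iff]
  linarith [h.norm_le v]

theorem continuous_sup (h : IsAdaptedPair P α β) : Continuous ⇑(α ⊔ β) :=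
  h.continuous_left.sup h.continuous_right

theorem isClosed_closedBall (h : IsAdaptedPair P α β) : IsClosed ((α ⊔ β).closedBall 0 r) := by
  rw [Seminorm.closedBall_zero_eq]
  exact isClosed_le h.continuous_sup continuous_const

theorem isOpen_ball (h : IsAdaptedPair P α β) : IsOpen ((α ⊔ β).ball 0 r) := by
  rw [Seminorm.ball_zero_eq]
  exact isOpen_lt h.continuous_sup continuous_const

end IsAdaptedPair

/-- `R` is analytic with relatively compact image on the closed `α ⊔ β`-ball of radius `r`, fixes
`0`, and preserves the cone `β ≤ α` there, shrinking its vectors at most by the factor `κ`. -/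
structure IsLocalConeMap (P : B →L[ℂ] N) (α β : Seminorm ℂ B) (R : B → B) (κ r : ℝ) : Prop
    extends IsAdaptedPair P α β where
  radius_pos : 0 < r
  rate_pos : 0 < κ
  rate_le_one : κ ≤ 1
  map_zero : R 0 = 0
  analyticAt : ∀ x ∈ (α ⊔ β).closedBall 0 r, AnalyticAt ℂ R x
  cone : ConeExpandingOn R α β κ ((α ⊔ β).closedBall 0 r)
  exists_isCompact : ∃ Q, IsCompact Q ∧ Set.MapsTo R ((α ⊔ β).closedBall 0 r) Q

namespace IsLocalConeMap

theorem zero_mem (h : IsLocalConeMap P α β R κ r) : 0 ∈ (α ⊔ β).closedBall 0 r := by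
  simpa using h.radius_pos.le

theorem continuousOn (h : IsLocalConeMap P α β R κ r) :
    ContinuousOn R ((α ⊔ β).closedBall 0 r) :=
  fun x hx ↦ (h.analyticAt x hx).continuousAt.continuousWithinAt

theorem exists_isCompact_mapsTo (h : IsLocalConeMap P α β R κ r) :
    ∃ Q, IsCompact Q ∧ Set.MapsTo R ((α ⊔ β).closedBall 0 r) Q ∧
      ∀ x : N, (x : B) ∈ (α ⊔ β).closedBall 0 r → (x : B) ∈ Q := by
  have := h.finiteDimensional
  have : ProperSpace N := FiniteDimensional.proper_rclike ℂ N
  obtain ⟨Q, hQ, hRQ⟩ := h.exists_isCompact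
  refine ⟨Q ∪ (↑) '' closedBall (0 : N) r,
    hQ.union ((isCompact_closedBall 0 r).image continuous_subtype_val),
    fun x hx ↦ .inl (hRQ hx), fun x hx ↦ .inr ⟨x, ?_, rfl⟩⟩
  rw [Seminorm.mem_closedBall_zero] at hx
  rw [mem_closedBall_zero_iff]
  exact (h.norm_coe_le x).trans (le_sup_left.trans hx)

theorem exists_orbit_of_forall_survivors (h : IsLocalConeMap P α β R κ r) (hK : IsCompact K)
    (hc : 0 < c) (hsurv : ∀ m, ∃ q ∈ K, β q ≤ α q ∧ c ≤ α q ∧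
      q ∈ survivors R ((α ⊔ β).closedBall 0 r) m) :
    ∃ p, β p ≤ α p ∧ 0 < α p ∧ ∀ m, R^[m] p ∈ (α ⊔ β).closedBall 0 r := by
  have hclosed : IsClosed {q | β q ≤ α q ∧ c ≤ α q} :=
    (isClosed_le h.continuous_right h.continuous_left).inter
      (isClosed_le continuous_const h.continuous_left)
  obtain ⟨p, ⟨-, hβα, hcα⟩, hp⟩ := exists_forall_iterate_mem (hK.inter_right hclosed)
    h.isClosed_closedBall h.continuousOn fun m ↦
      let ⟨q, hqK, hβα, hcα, hq⟩ := hsurv m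
      ⟨q, ⟨hqK, hβα, hcα⟩, hq⟩
  exact ⟨p, hβα, hc.trans_le hcα, hp⟩

theorem iterate_coe (h : IsLocalConeMap P α β R κ r) {x : N}
    (hx : (x : B) ∈ survivors R ((α ⊔ β).closedBall 0 r) m) :
    β (R^[m] x) ≤ α (R^[m] x) :=
  (h.cone.iterate h.rate_pos.le h.zero_mem h.map_zero hx (by simp [h.right_coe])).1

theorem mem_survivors_ball (h : IsLocalConeMap P α β R κ r)
    (hRQ : Set.MapsTo R ((α ⊔ β).closedBall 0 r) Q)
    (hNQ : ∀ x : N, (x : B) ∈ (α ⊔ β).closedBall 0 r → (x : B) ∈ Q)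
    (hQ : ∀ q ∈ Q, β q ≤ α q → r ≤ α q → q ∉ survivors R ((α ⊔ β).closedBall 0 r) n) {x : N}
    (hx : (x : B) ∈ survivors R ((α ⊔ β).closedBall 0 r) (m + 1))
    (hsmall : α (R^[m] x) < κ ^ n * r) :
    (x : B) ∈ survivors R ((α ⊔ β).ball 0 r) (m + 1) := by
  intro j hj
  have hcone : β (R^[j] x) ≤ α (R^[j] x) := h.iterate_coe (survivors_antitone hj.le hx)
  by_contra hout
  have hlarge : r ≤ α (R^[j] x) := by
    simpa [Seminorm.mem_ball_zero, Seminorm.sup_apply, hcone] using hout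
  have hjQ : R^[j] (x : B) ∈ Q := by
    cases j with
    | zero => exact hNQ x (hx 0 hj)
    | succ i => exact Function.iterate_succ_apply' R i x ▸ hRQ (hx i (by lia))
  have hescape : m - j < n := by
    by_contra! hle
    exact hQ _ hjQ hcone hlarge (iterate_mem_survivors (survivors_antitone (by lia) hx))
  have hgrowth := (h.cone.iterate h.rate_pos.le h.zero_mem h.map_zero (m := m - j)
    (iterate_mem_survivors (survivors_antitone (by lia) hx)) hcone).2
  rw [← Function.iterate_add_apply, Nat.sub_add_cancel (by lia)] at hgrowth
  have hpow : κ ^ n * r ≤ κ ^ (m - j) * α (R^[j] x) := by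
    have := h.rate_pos.le
    have := h.radius_pos.le
    exact mul_le_mul (pow_le_pow_of_le_one ‹_› h.rate_le_one hescape.le) hlarge ‹_› (by positivity)
  linarith

theorem iterate_ne_zero (h : IsLocalConeMap P α β R κ r)
    (hp : p ∈ survivors R ((α ⊔ β).closedBall 0 r) m) (hβα : β p ≤ α p) (hα : 0 < α p) :
    R^[m] p ≠ 0 := by
  intro hm
  have hle := (h.cone.iterate h.rate_pos.le h.zero_mem h.map_zero hp hβα).2
  rw [hm, _root_.map_zero] at hle
  exact (mul_pos (pow_pos h.rate_pos m) hα).not_ge hle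

theorem analyticAt_proj_iterate (h : IsLocalConeMap P α β R κ r) {x : N}
    (hx : (x : B) ∈ survivors R ((α ⊔ β).closedBall 0 r) m) :
    AnalyticAt ℂ (fun y : N ↦ P (R^[m] y)) x :=
  (P.analyticAt _).comp <| AnalyticAt.comp (g := R^[m]) (analyticAt_iterate h.analyticAt hx)
    (N.subtypeL.analyticAt x)

theorem exists_mul_norm_sub_le (h : IsLocalConeMap P α β R κ r) (m : ℕ) :
    ∃ c > 0, ∀ x y : N, (x : B) ∈ survivors R ((α ⊔ β).closedBall 0 r) m →
      (y : B) ∈ survivors R ((α ⊔ β).closedBall 0 r) m →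
      c * ‖x - y‖ ≤ ‖P (R^[m] x) - P (R^[m] y)‖ := by
  obtain ⟨C, hC, hαC⟩ := Seminorm.bound_of_continuous_normedSpace α h.continuous_left
  have hκ := h.rate_pos
  refine ⟨κ ^ m / C, by positivity, fun x y hx hy ↦ ?_⟩
  have hexp := (h.cone.iterate_sub hκ.le hx hy (by
    rw [← Submodule.coe_sub, h.right_coe]
    exact apply_nonneg α _)).2
  rw [div_mul_eq_mul_div, div_le_iff₀' hC]
  calc κ ^ m * ‖x - y‖
    _ ≤ κ ^ m * α (x - y) := by gcongr; exact h.norm_coe_le (x - y)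
    _ ≤ α (R^[m] x - R^[m] y) := hexp
    _ = α (P (R^[m] x) - P (R^[m] y) : N) := by rw [← map_sub, h.left_proj]
    _ ≤ C * ‖P (R^[m] x) - P (R^[m] y)‖ := hαC _

theorem exists_far_survivor (h : IsLocalConeMap P α β R κ r) (hA : HasFDerivAt R A 0)
    (hAe : A e = μ • (e : B)) (hμ : ‖μ‖ = 1) (he : e ≠ 0) (ht : 0 < t)
    (htrap : ∀ x : N, (x : B) ∈ survivors R ((α ⊔ β).closedBall 0 r) (m + 1) →
      ∀ z : ℂ, ‖z‖ < t → P (R^[m] x) = z • e → (x : B) ∈ survivors R ((α ⊔ β).ball 0 r) (m + 1)) :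
    ∃ x : N, (x : B) ∈ survivors R ((α ⊔ β).closedBall 0 r) (m + 1) ∧ t * ‖e‖ / 2 ≤ ‖x‖ := by
  by_contra! hsmall
  have := h.finiteDimensional
  set D : Set N := (↑) ⁻¹' survivors R ((α ⊔ β).closedBall 0 r) (m + 1)
  set Ω : Set N := (↑) ⁻¹' survivors R ((α ⊔ β).ball 0 r) (m + 1)
  have hball : (α ⊔ β).ball 0 r ⊆ (α ⊔ β).closedBall 0 r := Seminorm.ball_subset_closedBall _ _ _
  have hΩD : Ω ⊆ D := Set.preimage_mono (survivors_mono hball)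
  have hD : IsClosed D :=
    (isClosed_survivors h.isClosed_closedBall h.continuousOn _).preimage continuous_subtype_val
  have hΩ : IsOpen Ω := (isOpen_survivors h.isOpen_ball (h.continuousOn.mono hball) _).preimage
    continuous_subtype_val
  have hΦ : AnalyticOnNhd ℂ (fun y : N ↦ P (R^[m] y)) D := fun x hx ↦
    h.analyticAt_proj_iterate (survivors_antitone m.le_succ hx)
  have hclosure : closure Ω ⊆ D := closure_minimal hΩD hD
  have hfix : ∀ j, R^[j] 0 = 0 := Function.iterate_fixed h.map_zero
  obtain ⟨c, hc, hanti⟩ := h.exists_mul_norm_sub_le m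
  have hmono : ∀ x ∈ Ω, (x : B) ∈ survivors R ((α ⊔ β).closedBall 0 r) m := fun x hx ↦
    survivors_antitone m.le_succ (hΩD hx)
  have hle : t * ‖e‖ ≤ t * ‖e‖ / 2 := by
    refine mul_norm_le_of_inverse_branch hΩ (fun j _ ↦ by simpa [hfix] using h.radius_pos)
      (hΦ.mono hΩD) (hΦ.continuousOn.mono hclosure) hc
      (fun x hx y hy ↦ hanti x y (hmono x hx) (hmono y hy)) (by simp [hfix])
      (hasFDerivAt_proj_iterate hA h.map_zero m) (μ := μ ^ m) ?_ (by simp [hμ]) ht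
      (fun x hx z hz hxz ↦ htrap x (hclosure hx) z hz hxz) fun x hx ↦ (hsmall x (hΩD hx)).le
    rw [ContinuousLinearMap.comp_apply, ContinuousLinearMap.comp_apply, Submodule.subtypeL_apply,
      show (A ^ m) e = μ ^ m • (e : B) by simpa using aeval_apply_of_apply_eq_smul hAe (X ^ m),
      map_smul, h.proj_coe]
  have := mul_pos ht (norm_pos_iff.2 he)
  linarith

theorem exists_orbit_mem (h : IsLocalConeMap P α β R κ r) (hA : HasFDerivAt R A 0)
    (hAe : A e = μ • (e : B)) (hμ : ‖μ‖ = 1) (he : e ≠ 0) :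
    ∃ p, β p ≤ α p ∧ 0 < α p ∧ ∀ m, R^[m] p ∈ (α ⊔ β).closedBall 0 r := by
  obtain ⟨Q, hQ, hRQ, hNQ⟩ := h.exists_isCompact_mapsTo
  by_cases hlarge : ∀ n, ∃ q ∈ Q, β q ≤ α q ∧ r ≤ α q ∧ q ∈ survivors R ((α ⊔ β).closedBall 0 r) n
  · exact h.exists_orbit_of_forall_survivors hQ h.radius_pos hlarge
  push Not at hlarge
  obtain ⟨n, hn⟩ := hlarge
  have hκr : 0 < κ ^ n * r := mul_pos (pow_pos h.rate_pos n) h.radius_pos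
  have he₀ : 0 < ‖e‖ := norm_pos_iff.2 he
  have hαe : 0 < α e := he₀.trans_le (h.norm_coe_le e)
  refine h.exists_orbit_of_forall_survivors hQ (c := κ ^ n * r / α e * ‖e‖ / 2) (by positivity)
    fun m ↦ ?_
  obtain ⟨x, hx, hfar⟩ := h.exists_far_survivor (m := m) hA hAe hμ he (div_pos hκr hαe)
    fun x hx z hz hxz ↦ h.mem_survivors_ball hRQ hNQ hn hx <| by
      rwa [← h.left_proj, hxz, Submodule.coe_smul, map_smul_eq_mul, ← lt_div_iff₀ hαe]
  exact ⟨x, hNQ x (hx 0 m.succ_pos), by simp [h.right_coe], hfar.trans (h.norm_coe_le x),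
    survivors_antitone m.le_succ hx⟩

end IsLocalConeMap

end LocalConeMap

section GrowthRate

theorem min_mul_pow_le {u : ℕ → ℝ} {c l : ℝ} (hc : 0 ≤ c) (hl₀ : 0 ≤ l) (hl : l ≤ 1)
    (h : ∀ m, min c (l * u m) ≤ u (m + 1)) (m : ℕ) : min c (u 0) * l ^ m ≤ u m := by
  induction m with
  | zero => simp
  | succ m ih =>
    refine le_trans (le_min ?_ ?_) (h m)
    · calc min c (u 0) * l ^ (m + 1)
        _ ≤ c * 1 := by
          gcongr
          exacts [min_le_left _ _, pow_le_one₀ hl₀ hl]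
        _ = c := mul_one c
    · calc min c (u 0) * l ^ (m + 1)
        _ = l * (min c (u 0) * l ^ m) := by ring
        _ ≤ l * u m := by gcongr

theorem tendsto_one_div_mul_log_of_bounds {u : ℕ → ℝ} {M : ℝ} (hM : ∀ m, u m ≤ M)
    (hlow : ∀ l : ℝ, 0 < l → l < 1 → ∃ c > 0, ∀ m, c * l ^ m ≤ u m) :
    Tendsto (fun m : ℕ ↦ 1 / (m : ℝ) * Real.log (u m)) atTop (𝓝 0) := by
  have hconst (b : ℝ) : Tendsto (fun m : ℕ ↦ 1 / (m : ℝ) * b) atTop (𝓝 0) := by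
    simpa using tendsto_one_div_atTop_nhds_zero_nat.mul_const b
  have hpos : ∀ m, 0 < u m := fun m ↦
    let ⟨c, hc, hcu⟩ := hlow (1 / 2) (by norm_num) (by norm_num)
    (by positivity : 0 < c * (1 / 2) ^ m).trans_le (hcu m)
  refine tendsto_order.2 ⟨fun a ha ↦ ?_, fun a ha ↦ ?_⟩
  · have ha₂ : a / 2 < 0 := by linarith
    obtain ⟨c, hc, hcu⟩ := hlow (Real.exp (a / 2)) (Real.exp_pos _) (Real.exp_lt_one_iff.2 ha₂)
    filter_upwards [(hconst (Real.log c)).eventually_const_lt ha₂, eventually_gt_atTop 0]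
      with m hm hm₀
    have hlog : Real.log c + m * (a / 2) ≤ Real.log (u m) := by
      simpa [Real.log_mul hc.ne', Real.log_pow] using Real.log_le_log (by positivity) (hcu m)
    calc a
      _ < 1 / (m : ℝ) * Real.log c + a / 2 := by linarith
      _ = 1 / (m : ℝ) * (Real.log c + m * (a / 2)) := by field_simp
      _ ≤ 1 / (m : ℝ) * Real.log (u m) := by gcongr
  · filter_upwards [(hconst (Real.log M)).eventually_lt_const ha] with m hm
    exact lt_of_le_of_lt (by gcongr; exacts [hpos m, hM m]) hm

end GrowthRate

section OrbitGrowth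

variable {B : Type*} [NormedAddCommGroup B] [NormedSpace ℂ B] {N : Submodule ℂ B} {P : B →L[ℂ] N}
  {A : B →L[ℂ] B} {R : B → B} {α β γ : Seminorm ℂ B} {C κ κ' l r : ℝ} {p : B}

theorem IsLocalConeMap.exists_min_le_seminorm (h : IsLocalConeMap P α β R κ r)
    (hA : HasStrictFDerivAt R A 0) (hγ : Continuous γ) (hγA : ∀ v, κ' * γ v ≤ γ (A v))
    (hl : l < κ') (hC : 0 < C) (hαγ : ∀ v, α v ≤ C * γ v) :
    ∃ c > 0, ∀ x ∈ (α ⊔ β).closedBall 0 r, β x ≤ α x → min c (l * γ x) ≤ γ (R x) := by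
  have hnorm {x : B} (hx : β x ≤ α x) : ‖x‖ ≤ 2 * α x := by linarith [h.norm_le x]
  have hnear : ∀ᶠ x in 𝓝 (0 : B), ‖x‖ ≤ 2 * C * γ x → l * γ x ≤ γ (R x) := by
    simpa [h.map_zero] using (Continuous.prodMk_left (0 : B)).tendsto 0
      |>.eventually (eventually_mul_seminorm_le hA hγ hγA hl (by positivity : 0 < 2 * C))
  obtain ⟨δ, hδ, hnear⟩ := nhds_basis_ball.eventually_iff.1 hnear
  have hκ := h.rate_pos
  refine ⟨κ * (δ / 2) / C, by positivity, fun x hx hβα ↦ ?_⟩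
  by_cases hxδ : ‖x‖ < δ
  · refine min_le_of_right_le (hnear (mem_ball_zero_iff.2 hxδ) ?_)
    linarith [hnorm hβα, hαγ x]
  · refine min_le_of_left_le ((div_le_iff₀' hC).2 ?_)
    have hexp := (h.cone x hx 0 h.zero_mem (by simpa using hβα)).2
    rw [h.map_zero, sub_zero, sub_zero] at hexp
    calc κ * (δ / 2)
      _ ≤ κ * α x := by
        gcongr
        linarith [hnorm hβα]
      _ ≤ C * γ (R x) := hexp.trans (hαγ _)

theorem IsCenterProjection.exists_mul_pow_le_norm_iterate (hP : IsCenterProjection A P)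
    (h : IsLocalConeMap P α β R κ r) (hA : HasStrictFDerivAt R A 0) (hβα : β p ≤ α p)
    (hα : 0 < α p) (hp : ∀ m, R^[m] p ∈ (α ⊔ β).closedBall 0 r) (hl₀ : 0 < l) (hl : l < 1) :
    ∃ c > 0, ∀ m, c * l ^ m ≤ ‖R^[m] p‖ := by
  obtain ⟨κ', hlκ', hκ'⟩ := exists_between hl
  obtain ⟨γ, hγ, -, hPγ, hγA⟩ := hP.exists_center_seminorm (hl₀.trans hlκ') hκ'
  obtain ⟨C, hC, hαC⟩ := Seminorm.bound_of_continuous_normedSpace α h.continuous_left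
  obtain ⟨D, hD, hγD⟩ := Seminorm.bound_of_continuous_normedSpace γ hγ
  have hαγ (v : B) : α v ≤ C * γ v :=
    calc α v
      _ = α (P v) := (h.left_proj v).symm
      _ ≤ C * ‖P v‖ := hαC _
      _ ≤ C * γ v := by gcongr; exact hPγ v
  have hγp : 0 < γ p := pos_of_mul_pos_right (hα.trans_le (hαγ p)) hC.le
  obtain ⟨c, hc, hmin⟩ := h.exists_min_le_seminorm hA hγ hγA hlκ' hC hαγ
  have hstep (m : ℕ) : min c (l * γ (R^[m] p)) ≤ γ (R^[m + 1] p) := by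
    rw [Function.iterate_succ_apply']
    exact hmin _ (hp m) (h.cone.iterate h.rate_pos.le h.zero_mem h.map_zero (fun j _ ↦ hp j) hβα).1
  refine ⟨min c (γ p) / D, div_pos (lt_min hc hγp) hD, fun m ↦ ?_⟩
  rw [div_mul_eq_mul_div, div_le_iff₀' hD]
  exact (min_mul_pow_le hc.le hl₀.le hl.le hstep m).trans (hγD _)

theorem IsCenterProjection.tendsto_log_norm_iterate (hP : IsCenterProjection A P)
    (h : IsLocalConeMap P α β R κ r) (hA : HasStrictFDerivAt R A 0) (hβα : β p ≤ α p)
    (hα : 0 < α p) (hp : ∀ m, R^[m] p ∈ (α ⊔ β).closedBall 0 r) :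
    Tendsto (fun m : ℕ ↦ 1 / (m : ℝ) * Real.log ‖R^[m] p‖) atTop (𝓝 0) := by
  refine tendsto_one_div_mul_log_of_bounds (M := 2 * r) (fun m ↦ ?_) fun l hl₀ hl ↦
    hP.exists_mul_pow_le_norm_iterate h hA hβα hα hp hl₀ hl
  have hm := (Seminorm.mem_closedBall_zero _).1 (hp m)
  rw [Seminorm.sup_apply, max_le_iff] at hm
  linarith [h.norm_le (R^[m] p)]

end OrbitGrowth

section Conclusion

variable {B : Type*} [NormedAddCommGroup B] [NormedSpace ℂ B]

theorem tendstoUniformlyOn_inv_smul_sub {𝕜 E F : Type*} [NontriviallyNormedField 𝕜]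
    [NormedAddCommGroup E] [NormedSpace 𝕜 E] [NormedAddCommGroup F] [NormedSpace 𝕜 F] {f : E → F}
    {L : E →L[𝕜] F} {x : E} (hf : HasFDerivAt f L x) :
    TendstoUniformlyOn (fun (s : 𝕜) v ↦ s⁻¹ • (f (x + s • v) - f x)) L (𝓝[≠] 0) (ball 0 1) := by
  refine Metric.tendstoUniformlyOn_iff.2 fun ε hε ↦ ?_
  obtain ⟨δ, hδ, hnear⟩ :=
    nhds_basis_ball.eventually_iff.1 (hf.isLittleO.def (half_pos hε))
  filter_upwards [nhdsWithin_le_nhds (ball_mem_nhds (0 : 𝕜) hδ), self_mem_nhdsWithin]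
    with s hsδ hs v hv
  rw [mem_ball_zero_iff] at hv hsδ
  have hsv : ‖s • v‖ ≤ ‖s‖ := by
    rw [norm_smul]
    exact mul_le_of_le_one_right (norm_nonneg s) hv.le
  have happrox := hnear (x := x + s • v) (by simpa using hsv.trans_lt hsδ)
  rw [add_sub_cancel_left, map_smul] at happrox
  rw [dist_eq_norm', ← inv_smul_smul₀ hs (L v), ← smul_sub, norm_smul, norm_inv,
    inv_mul_lt_iff₀ (norm_pos_iff.2 hs)]
  calc ‖f (x + s • v) - f x - s • L v‖
    _ ≤ ε / 2 * ‖s • v‖ := happrox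
    _ ≤ ε / 2 * ‖s‖ := by gcongr
    _ < ‖s‖ * ε := by linarith [mul_pos (norm_pos_iff.2 hs) hε]

theorem isCompactOperator_of_eventually_mem {𝕜 E F : Type*} [NontriviallyNormedField 𝕜]
    [NormedAddCommGroup E] [NormedSpace 𝕜 E] [NormedAddCommGroup F] [NormedSpace 𝕜 F]
    [CompleteSpace F] {f : E → F} {L : E →L[𝕜] F} {x : E} {Q : Set F} (hf : HasFDerivAt f L x)
    (hQ : IsCompact Q) (hfQ : ∀ᶠ y in 𝓝 x, f y ∈ Q) : IsCompactOperator L := by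
  refine (isCompactOperator_iff_isCompact_closure_image_ball (L : E →ₗ[𝕜] F) one_pos).2
    (TotallyBounded.isCompact_of_isClosed (.closure ?_) isClosed_closure)
  refine Metric.totallyBounded_iff.2 fun ε hε ↦ ?_
  obtain ⟨δ, hδ, hfQ⟩ := nhds_basis_ball.eventually_iff.1 hfQ
  obtain ⟨s, hquot, hsδ⟩ := ((Metric.tendstoUniformlyOn_iff.1 (tendstoUniformlyOn_inv_smul_sub hf)
    _ (half_pos hε)).and (nhdsWithin_le_nhds (ball_mem_nhds (0 : 𝕜) hδ))).exists
  have hK : IsCompact ((fun q ↦ s⁻¹ • (q - f x)) '' Q) := hQ.image (by fun_prop)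
  obtain ⟨t, ht, hcover⟩ := Metric.totallyBounded_iff.1 hK.totallyBounded (ε / 2) (half_pos hε)
  refine ⟨t, ht, ?_⟩
  rintro _ ⟨v, hv, rfl⟩
  have hsv : ‖s • v‖ < δ := by
    rw [norm_smul]
    exact (mul_le_of_le_one_right (norm_nonneg s) (mem_ball_zero_iff.1 hv).le).trans_lt
      (mem_ball_zero_iff.1 hsδ)
  obtain ⟨y, hy, hdist⟩ :=
    Set.mem_iUnion₂.1 (hcover ⟨f (x + s • v), hfQ (by simpa using hsv), rfl⟩)
  refine Set.mem_iUnion₂.2 ⟨y, hy, ?_⟩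
  calc dist (L v) y
    _ ≤ dist (L v) (s⁻¹ • (f (x + s • v) - f x)) + dist (s⁻¹ • (f (x + s • v) - f x)) y :=
      dist_triangle _ _ _
    _ < ε := by linarith [hquot v hv, mem_ball.1 hdist]

theorem exists_isCompact_eventually_comp_mem {𝕜 X E F : Type*} [NontriviallyNormedField 𝕜]
    [TopologicalSpace X] [NormedAddCommGroup E] [NormedSpace 𝕜 E] [NormedAddCommGroup F]
    [NormedSpace 𝕜 F] {i : E →L[𝕜] F} (hi : IsCompactOperator i) {T : X → E} {x : X}
    (hT : ContinuousAt T x) :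
    ∃ Q, IsCompact Q ∧ ∀ᶠ y in 𝓝 x, i (T y) ∈ Q := by
  refine ⟨closure (i '' closedBall 0 (‖T x‖ + 1)), hi.isCompact_closure_image_closedBall _, ?_⟩
  filter_upwards [hT.norm.eventually_lt_const (lt_add_one ‖T x‖)] with y hy
  exact subset_closure ⟨T y, by simpa using hy.le, rfl⟩

theorem IsCenterProjection.exists_isLocalConeMap [CompleteSpace B] {N : Submodule ℂ B}
    {P : B →L[ℂ] N} {R : B → B} {Q V : Set B} (hP : IsCenterProjection (fderiv ℂ R 0) P)
    (hcompact : IsCompactOperator (fderiv ℂ R 0))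
    (hspec : spectrum ℂ (fderiv ℂ R 0) ⊆ closedBall 0 1)
    (hR : AnalyticAt ℂ R 0) (hR₀ : R 0 = 0) (hQ : IsCompact Q) (hRQ : ∀ᶠ x in 𝓝 0, R x ∈ Q)
    (hV : V ∈ 𝓝 0) :
    ∃ (α β : Seminorm ℂ B) (κ r : ℝ), IsLocalConeMap P α β R κ r ∧ (α ⊔ β).closedBall 0 r ⊆ V := by
  obtain ⟨θ, hθ₀, hθ, β, hβ, hβN, hPβ, hβA⟩ := hP.exists_stable_seminorm hcompact hspec
  obtain ⟨κ, hθκ, hκ⟩ := exists_between hθ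
  obtain ⟨κ', hκκ', hκ'⟩ := exists_between hκ
  have hκ₀ := hθ₀.trans_lt hθκ
  obtain ⟨α, hα, hαP, hPα, hαA⟩ := hP.exists_center_seminorm (hκ₀.trans hκκ') hκ'
  have hpair : IsAdaptedPair P α β :=
    { finiteDimensional := hP.finiteDimensional
      proj_coe := hP.proj_coe
      continuous_left := hα
      continuous_right := hβ
      left_proj := hαP
      right_coe := hβN
      norm_le := fun v ↦
        calc ‖v‖
          _ = ‖(P v : B) + (v - P v)‖ := by rw [add_sub_cancel]
          _ ≤ ‖(P v : B)‖ + ‖v - P v‖ := norm_add_le _ _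
          _ ≤ α v + β v := add_le_add (hPα v) (hPβ v) }
  obtain ⟨W, hW, hcone⟩ := exists_coneExpandingOn hR.hasStrictFDerivAt hα hβ two_pos
    (fun v hv ↦ by linarith [hpair.norm_le v]) hαA hβA hθ₀ hθκ hκκ'
  obtain ⟨r, hr, hbox⟩ := hpair.exists_closedBall_subset
    (inter_mem (inter_mem hV hW) (inter_mem hR.eventually_analyticAt hRQ))
  exact ⟨α, β, κ, r,
    { toIsAdaptedPair := hpair
      radius_pos := hr
      rate_pos := hκ₀
      rate_le_one := hκ.le
      map_zero := hR₀
      analyticAt := fun x hx ↦ (hbox hx).2.1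
      cone := hcone.mono fun x hx ↦ (hbox hx).1.2
      exists_isCompact := ⟨Q, hQ, fun x hx ↦ (hbox hx).2.2⟩ }, fun x hx ↦ (hbox hx).1.1⟩

theorem small_orbits_theorem_general [CompleteSpace B] {R : B → B} {Q V : Set B}
    (hR : AnalyticAt ℂ R 0) (hR₀ : R 0 = 0) (hQ : IsCompact Q) (hRQ : ∀ᶠ x in 𝓝 0, R x ∈ Q)
    (hspec₁ : spectrum ℂ (fderiv ℂ R 0) ⊆ closedBall 0 1)
    (hspec₂ : (spectrum ℂ (fderiv ℂ R 0) ∩ sphere 0 1).Nonempty) (hV : V ∈ 𝓝 0) :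
    ∃ f ∈ V, (∀ m : ℕ, R^[m] f ∈ V ∧ R^[m] f ≠ 0) ∧
      Tendsto (fun m : ℕ ↦ 1 / (m : ℝ) * Real.log ‖R^[m] f‖) atTop (𝓝 0) := by
  have hA := hR.hasStrictFDerivAt
  have hcompact := isCompactOperator_of_eventually_mem hA.hasFDerivAt hQ hRQ
  obtain ⟨N, P, hP⟩ := exists_isCenterProjection hcompact
  obtain ⟨α, β, κ, r, h, hbox⟩ := hP.exists_isLocalConeMap hcompact hspec₁ hR hR₀ hQ hRQ hV
  obtain ⟨e, μ, he, hμ, hAe⟩ := hP.exists_eigenvector hcompact hspec₂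
  obtain ⟨p, hβα, hα, hp⟩ := h.exists_orbit_mem hA.hasFDerivAt hAe hμ he
  exact ⟨p, hbox (hp 0), fun m ↦ ⟨hbox (hp m), h.iterate_ne_zero (fun j _ ↦ hp j) hβα hα⟩,
    hP.tendsto_log_norm_iterate h hA hβα hα hp⟩

end Conclusion

/-- **Small Orbits Theorem.** Let `B ⊇ B'` be complex Banach spaces with a compact injective
continuous linear embedding `i : B' → B`.  Let `T : (U, 0) → (B', 0)` be complex analytic on a
neighborhood `U` of `0` in `B`, and `R = i ∘ T`.  If the spectrum of `DR(0)` lies in the closed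
unit disk and meets the unit circle, then `R` has slow small orbits: every neighborhood `V ⊆ U`
of `0` contains a point `f` whose forward orbit stays in `V`, never hits `0`, and satisfies
`(1/m) log ‖R^m f‖ → 0`. -/
theorem small_orbits_theorem
    {B B' : Type*} [NormedAddCommGroup B] [NormedSpace ℂ B] [CompleteSpace B]
    [NormedAddCommGroup B'] [NormedSpace ℂ B'] [CompleteSpace B']
    (i : B' →L[ℂ] B) (hi_inj : Function.Injective i)
    (hi_cpt : IsCompactOperator (⇑i))
    (U : Set B) (hU : IsOpen U) (h0U : (0 : B) ∈ U)
    (T : B → B') (hT : AnalyticOnNhd ℂ T U) (hT0 : T 0 = 0)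
    (R : B → B) (hR : ∀ x, R x = i (T x))
    (hspec₁ : spectrum ℂ (fderiv ℂ R 0) ⊆ Metric.closedBall (0 : ℂ) 1)
    (hspec₂ : (spectrum ℂ (fderiv ℂ R 0) ∩ Metric.sphere (0 : ℂ) 1).Nonempty) :
    ∀ V ∈ nhds (0 : B), V ⊆ U →
      ∃ f ∈ V, (∀ m : ℕ, R^[m] f ∈ V ∧ R^[m] f ≠ 0) ∧
        Tendsto (fun m : ℕ => (1 / (m : ℝ)) * Real.log ‖R^[m] f‖) atTop (nhds 0) := by
  obtain rfl : R = fun x ↦ i (T x) := funext hR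
  obtain ⟨Q, hQ, hTQ⟩ := exists_isCompact_eventually_comp_mem hi_cpt (hT 0 h0U).continuousAt
  exact fun V hV _ ↦ small_orbits_theorem_general ((i.analyticAt _).comp (hT 0 h0U)) (by simp [hT0])
    hQ hTQ hspec₁ hspec₂ hV
end

section
/- Growth of a continuous cocycle over a system with the specification property (scalar form of the key expansion lemma): let (X, d) be a nonempty compact metric space and L : X → X a continuous map satisfying the specification property. Let a : X → ℝ be continuous, write S_n a(x) = Σ_{k=0}^{n−1} a(L^k x) for the Birkhoff sums, and let γ = inf{ S_m a(y)/m : m ≥ 1, y ∈ X, L^m y = y } (the infimum over all periodic orbits of the orbit averages of a; the set of periodic points is nonempty by specification). Then for every real λ < γ there exists a constant c ∈ ℝ such that S_n a(x) ≥ c + n·λ for every x ∈ X and every n ≥ 0. -/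
open Filter

/-- A continuous map `L` of a compact metric space satisfies the **specification property** if
for every `ε > 0` there is `l ∈ ℕ` such that every orbit segment of length `n ≥ 1` is
`ε`-shadowed by a periodic orbit of period `m` with `1 ≤ m ≤ n + l`. -/
def SpecificationProperty {X : Type*} [MetricSpace X] (L : X → X) : Prop :=
  ∀ ε : ℝ, 0 < ε → ∃ l : ℕ, ∀ n : ℕ, 1 ≤ n → ∀ x : X,
    ∃ m : ℕ, 1 ≤ m ∧ m ≤ n + l ∧ ∃ y : X, L^[m] y = y ∧
      ∀ k : ℕ, k < n → dist (L^[k] x) (L^[k] y) ≤ ε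

/-!
Along a periodic orbit of period `m ≤ n + l` shadowing a segment of length `n`, the Birkhoff sum
over the first `n` points is at least `n * γ - C` with `C` depending only on `l`, if `n ≤ m`.
Specification does not prevent `m` from being much smaller than `n`, however. In that case write
`n = q * m + r` with `r < m`: the `q` full periods contribute at least `q * m * γ`, and the
remaining `r` terms are estimated by induction on the length, with the rate `γ - 2 * δ`. This costs
`2 * r * δ`, which is at most `n * δ` because `2 * r ≤ n`. The shadowing costs another `n * δ`, so
the two losses add up to exactly the `2 * n * δ` that the rate `γ - 2 * δ` allows, and the
additive constant does not deteriorate along the induction.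
-/

open Function

section BirkhoffSum

variable {α M : Type*} {f : α → α} {g : α → M} {b : M} {m : ℕ} {x : α}

theorem birkhoffSum_mul_add_of_isPeriodicPt [AddCommMonoid M] (hx : IsPeriodicPt f m x)
    (g : α → M) (q r : ℕ) :
    birkhoffSum f g (q * m + r) x = q • birkhoffSum f g m x + birkhoffSum f g r x := by
  induction q with
  | zero => simp only [zero_mul, zero_add, zero_nsmul]
  | succ q ih =>
    rw [show (q + 1) * m + r = m + (q * m + r) by ring, birkhoffSum_add, hx.eq, ih, succ_nsmul',
      add_assoc]

variable [AddCommMonoid M] [Preorder M] [AddLeftMono M]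

theorem nsmul_le_birkhoffSum (hg : ∀ y, b ≤ g y) (f : α → α) (n : ℕ) (x : α) :
    n • b ≤ birkhoffSum f g n x := by
  simpa only [birkhoffSum, Finset.card_range] using
    Finset.card_nsmul_le_sum (Finset.range n) (fun k ↦ g (f^[k] x)) b fun k _ ↦ hg (f^[k] x)

theorem birkhoffSum_le_nsmul (hg : ∀ y, g y ≤ b) (f : α → α) (n : ℕ) (x : α) :
    birkhoffSum f g n x ≤ n • b :=
  nsmul_le_birkhoffSum (M := Mᵒᵈ) hg f n x

end BirkhoffSum

section PeriodicOrbits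

variable {α : Type*} {f : α → α} {g : α → ℝ} {b c γ δ : ℝ} {l m n : ℕ} {x : α}

/-- The set of averages of `g` over the periodic orbits of `f`. Each orbit is averaged over every
positive period, minimal or not, which does not change the values that occur. -/
def periodicAverages (f : α → α) (g : α → ℝ) : Set ℝ :=
  {r | ∃ m : ℕ, 1 ≤ m ∧ ∃ y : α, IsPeriodicPt f m y ∧ r = birkhoffSum f g m y / m}

theorem bddBelow_periodicAverages (hg : BddBelow (Set.range g)) (f : α → α) :
    BddBelow (periodicAverages f g) := by
  obtain ⟨b, hb⟩ := hg
  refine ⟨b, ?_⟩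
  rintro _ ⟨m, hm, y, -, rfl⟩
  rw [le_div_iff₀' (Nat.cast_pos.mpr hm), ← nsmul_eq_mul]
  exact nsmul_le_birkhoffSum (Set.forall_mem_range.mp hb) f m y

theorem mul_le_birkhoffSum_of_mem_lowerBounds (hγ : γ ∈ lowerBounds (periodicAverages f g))
    (hm : 1 ≤ m) (hx : IsPeriodicPt f m x) : m * γ ≤ birkhoffSum f g m x :=
  (le_div_iff₀' (Nat.cast_pos.mpr hm)).mp (hγ ⟨m, hm, x, hx, rfl⟩)

theorem mul_sub_le_birkhoffSum_of_le (hg : ∀ y, g y ≤ b) (hγb : γ ≤ b)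
    (hγ : m * γ ≤ birkhoffSum f g m x) (hnm : n ≤ m) (hml : m ≤ n + l) :
    n * γ - l * (b - γ) ≤ birkhoffSum f g n x := by
  obtain ⟨j, rfl⟩ := Nat.exists_eq_add_of_le hnm
  have hjl : (j : ℝ) * (b - γ) ≤ l * (b - γ) :=
    mul_le_mul_of_nonneg_right (Nat.cast_le.mpr (by lia)) (sub_nonneg.mpr hγb)
  have htail : birkhoffSum f g j (f^[n] x) ≤ j * b := by
    simpa only [nsmul_eq_mul] using birkhoffSum_le_nsmul hg f j (f^[n] x)
  rw [birkhoffSum_add] at hγ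
  push_cast at hγ
  linarith

theorem add_mul_le_birkhoffSum_of_mod (hδ : 0 ≤ δ) (hx : IsPeriodicPt f m x) (hm : 1 ≤ m)
    (hmn : m ≤ n) (hγ : m * γ ≤ birkhoffSum f g m x)
    (hmod : c + (n % m : ℕ) * (γ - 2 * δ) ≤ birkhoffSum f g (n % m) x) :
    c + n * (γ - δ) ≤ birkhoffSum f g n x := by
  have hdiv : n / m * m + n % m = n := Nat.div_add_mod' n m
  have hhalf : 2 * (n % m) ≤ n := by
    have : m ≤ n / m * m := Nat.le_mul_of_pos_left m (Nat.div_pos hmn hm)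
    have : n % m < m := Nat.mod_lt n hm
    lia
  have hloss : 2 * ((n % m : ℕ) : ℝ) * δ ≤ n * δ :=
    mul_le_mul_of_nonneg_right (mod_cast hhalf) hδ
  have hcast : ((n / m : ℕ) : ℝ) * m + (n % m : ℕ) = n := mod_cast hdiv
  calc c + n * (γ - δ)
      ≤ c + n * γ - 2 * (n % m : ℕ) * δ := by linarith
    _ = (n / m : ℕ) * (m * γ) + (c + (n % m : ℕ) * (γ - 2 * δ)) := by rw [← hcast]; ring
    _ ≤ (n / m : ℕ) * birkhoffSum f g m x + birkhoffSum f g (n % m) x := by gcongr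
    _ = birkhoffSum f g n x := by
      rw [← nsmul_eq_mul, ← birkhoffSum_mul_add_of_isPeriodicPt hx, hdiv]

end PeriodicOrbits

namespace SpecificationProperty

variable {X : Type*} [MetricSpace X] {L : X → X}

theorem exists_isPeriodicPt_dist_birkhoffSum_le {E : Type*} [NormedAddCommGroup E]
    (hL : SpecificationProperty L) {a : X → E} (ha : UniformContinuous a) {δ : ℝ} (hδ : 0 < δ) :
    ∃ l : ℕ, ∀ n : ℕ, 1 ≤ n → ∀ x : X, ∃ m : ℕ, 1 ≤ m ∧ m ≤ n + l ∧ ∃ y : X,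
      IsPeriodicPt L m y ∧ dist (birkhoffSum L a n x) (birkhoffSum L a n y) ≤ n * δ := by
  obtain ⟨ε, hε, hdist⟩ := Metric.uniformContinuous_iff_le.mp ha δ hδ
  obtain ⟨l, hl⟩ := hL ε hε
  refine ⟨l, fun n hn x ↦ ?_⟩
  obtain ⟨m, hm, hml, y, hy, hxy⟩ := hl n hn x
  refine ⟨m, hm, hml, y, hy, ?_⟩
  calc dist (birkhoffSum L a n x) (birkhoffSum L a n y)
      ≤ ∑ k ∈ Finset.range n, dist (a (L^[k] x)) (a (L^[k] y)) :=
        dist_birkhoffSum_birkhoffSum_le L a n x y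
    _ ≤ ∑ _k ∈ Finset.range n, δ :=
        Finset.sum_le_sum fun k hk ↦ hdist (hxy k (Finset.mem_range.mp hk))
    _ = n * δ := by rw [Finset.sum_const, Finset.card_range, nsmul_eq_mul]

end SpecificationProperty

theorem cocycle_growth_specification_general {X : Type*} [MetricSpace X] {L : X → X}
    (hspec : SpecificationProperty L) {a : X → ℝ} (ha : UniformContinuous a)
    (hbdd : BddAbove (Set.range a)) {γ : ℝ} (hγ : γ ∈ lowerBounds (periodicAverages L a))
    {lam : ℝ} (hlam : lam < γ) :
    ∃ c : ℝ, ∀ x : X, ∀ n : ℕ, c + n * lam ≤ birkhoffSum L a n x := by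
  obtain ⟨δ, hδ, rfl⟩ : ∃ δ : ℝ, 0 < δ ∧ lam = γ - 2 * δ :=
    ⟨(γ - lam) / 2, half_pos (sub_pos.mpr hlam), by ring⟩
  obtain ⟨l, hl⟩ := hspec.exists_isPeriodicPt_dist_birkhoffSum_le ha hδ
  obtain ⟨b, hγb, hb⟩ := hbdd.exists_ge γ
  have hab : ∀ y, a y ≤ b := Set.forall_mem_range.mp hb
  refine ⟨-(l * (b - γ)), fun x n ↦ ?_⟩
  induction n using Nat.strong_induction_on generalizing x with
  | _ n ih =>
  obtain rfl | hn := Nat.eq_zero_or_pos n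
  · simpa using mul_nonneg l.cast_nonneg (sub_nonneg.mpr hγb)
  obtain ⟨m, hm, hml, y, hy, hxy⟩ := hl n hn x
  have hγm := mul_le_birkhoffSum_of_mem_lowerBounds hγ hm hy
  have hyn : -(l * (b - γ)) + n * (γ - δ) ≤ birkhoffSum L a n y := by
    obtain hnm | hmn := le_total n m
    · have hy_long := mul_sub_le_birkhoffSum_of_le hab hγb hγm hnm hml
      linarith [mul_nonneg n.cast_nonneg hδ.le]
    · exact add_mul_le_birkhoffSum_of_mod hδ.le hy hm hmn hγm
        (ih (n % m) ((Nat.mod_lt n hm).trans_le hmn) y)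
  linarith [(abs_le.mp hxy).1]

/-- **Growth of a continuous cocycle over a system with specification** (scalar form of the
key expansion lemma): if `γ` is the infimum over all periodic orbits of the orbit averages of
a continuous function `a`, then for every `λ < γ` the Birkhoff sums satisfy
`S_n a(x) ≥ c + nλ` for all `x` and `n`, for some constant `c`. -/
theorem cocycle_growth_specification
    {X : Type*} [MetricSpace X] [CompactSpace X] [Nonempty X]
    (L : X → X) (hL : Continuous L) (hspec : SpecificationProperty L)
    (a : X → ℝ) (ha : Continuous a)
    (γ : ℝ)
    (hγ : γ = sInf {r : ℝ | ∃ m : ℕ, 1 ≤ m ∧ ∃ y : X, L^[m] y = y ∧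
      r = (∑ k ∈ Finset.range m, a (L^[k] y)) / m}) :
    ∀ lam : ℝ, lam < γ → ∃ c : ℝ, ∀ x : X, ∀ n : ℕ,
      c + n * lam ≤ ∑ k ∈ Finset.range n, a (L^[k] x) := by
  subst hγ
  exact fun _ ↦ cocycle_growth_specification_general hspec
    (CompactSpace.uniformContinuous_of_continuous ha) (isCompact_range ha).bddAbove
    fun _ ↦ csInf_le (bddBelow_periodicAverages (isCompact_range ha).bddBelow L)
end

section
/- Bounded ratio distortion at all scales implies C^{1+α}-conformality at a point: let M ⊆ ℂ, let a, b ∈ ℂ, let h : M → ℂ, and let α > 0, C > 0, ε₀ > 0. Assume: (i) for every r ∈ (0, ε₀) there exists z ∈ M with |z − a| = r; (ii) h(u) ≠ b for every u ∈ M with 0 < |u − a| ≤ ε₀; (iii) for all u, v ∈ M with 0 < |v − a| ≤ |u − a| ≤ ε₀ and |u − a| ≤ 2|v − a|, one has |((h(u) − b)·(v − a)) / ((h(v) − b)·(u − a)) − 1| ≤ C·|u − a|^α. Then there exist τ ∈ ℂ \ {0} and C′ > 0 such that for every u ∈ M with 0 < |u − a| ≤ ε₀, |(h(u) − b)/(τ·(u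 − a)) − 1| ≤ C′·|u − a|^α; in particular (h(u) − b)/(u − a) → τ as u → a within M. -/
open Filter

/-!
Let `g u = (h u - b) / (u - a)`, so that the ratio distortion is `g u / g v - 1`. Along points `z n`
on the spheres of radius `ε₀ / 2 ^ (n + 1)` consecutive ratios are geometrically close to `1`, hence
the telescoping infinite product of these ratios converges to a nonzero limit; this says that
`g (z n)` tends to some `τ ≠ 0` and that `g (z n) / τ - 1` decays at the rate of the first omitted
ratio. Every other point is comparable with some `z n`, and inherits the estimate from it.
-/

lemma norm_mul_sub_one_le {R : Type*} [SeminormedRing R] (x y : R) :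
    ‖x * y - 1‖ ≤ ‖x - 1‖ + ‖y - 1‖ + ‖x - 1‖ * ‖y - 1‖ := by
  have expand : x * y - 1 = (x - 1) + (y - 1) + (x - 1) * (y - 1) := by noncomm_ring
  rw [expand]
  exact (norm_add_le _ _).trans (add_le_add (norm_add_le _ _) (norm_mul_le _ _))

lemma prod_range_div_succ {G₀ : Type*} [CommGroupWithZero G₀] {w : ℕ → G₀} (hw : ∀ n, w n ≠ 0)
    (n : ℕ) :
    ∏ i ∈ Finset.range n, w i / w (i + 1) = w 0 / w n :=
  Finset.prod_range_induction _ (fun n ↦ w 0 / w n) (div_self (hw 0)) n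
    fun k _ ↦ (div_mul_div_cancel₀ (hw k)).symm

lemma norm_tprod_one_add_sub_one_le {R ι : Type*} [NormedCommRing R] [NormOneClass R]
    [CompleteSpace R] {f : ι → R} {u : ι → ℝ} {S : ℝ} (hu : HasSum u S) (hfu : ∀ i, ‖f i‖ ≤ u i) :
    ‖∏' i, (1 + f i) - 1‖ ≤ Real.exp S - 1 := by
  have hf : Summable fun i ↦ ‖f i‖ := hu.summable.of_nonneg_of_le (fun _ ↦ norm_nonneg _) hfu
  refine le_of_tendsto' ((multipliable_one_add_of_summable hf).hasProd.sub_const 1).norm fun t ↦ ?_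
  calc ‖∏ i ∈ t, (1 + f i) - 1‖ ≤ Real.exp (∑ i ∈ t, ‖f i‖) - 1 :=
        t.norm_prod_one_add_sub_one_le f
    _ ≤ Real.exp S - 1 := by
        gcongr
        exact (Finset.sum_le_sum fun i _ ↦ hfu i).trans
          (sum_le_hasSum t (fun i _ ↦ (norm_nonneg _).trans (hfu i)) hu)

lemma exp_sub_one_le_mul_exp (x : ℝ) : Real.exp x - 1 ≤ x * Real.exp x := by
  have tangent_bound : (-x + 1) * Real.exp x ≤ Real.exp (-x) * Real.exp x := by
    gcongr
    exact Real.add_one_le_exp (-x)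
  rw [← Real.exp_add, neg_add_cancel, Real.exp_zero] at tangent_bound
  linarith

lemma exp_mul_sub_one_le {S t : ℝ} (hS : 0 ≤ S) (ht₀ : 0 ≤ t) (ht₁ : t ≤ 1) :
    Real.exp (S * t) - 1 ≤ Real.exp S * (S * t) :=
  calc Real.exp (S * t) - 1 ≤ S * t * Real.exp (S * t) := exp_sub_one_le_mul_exp _
    _ ≤ S * t * Real.exp S := by
        gcongr
        exact mul_le_of_le_one_right hS ht₁
    _ = Real.exp S * (S * t) := mul_comm _ _

lemma div_pow_succ_rpow {ε Λ : ℝ} (hε : 0 ≤ ε) (hΛ : 0 ≤ Λ) (α : ℝ) (n : ℕ) :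
    (ε / Λ ^ (n + 1)) ^ α = (ε / Λ) ^ α * (Λ ^ α)⁻¹ ^ n := by
  rw [pow_succ', ← div_div, Real.div_rpow (div_nonneg hε hΛ) (pow_nonneg hΛ n),
    ← Real.rpow_pow_comm hΛ, inv_pow, div_eq_mul_inv]

lemma exists_div_pow_succ_le_and_le_mul {K : Type*} [Field K] [LinearOrder K]
    [IsStrictOrderedRing K] [Archimedean K] {ε Λ ρ : K} (hΛ : 1 < Λ) (hρ : 0 < ρ) (hρε : ρ ≤ ε) :
    ∃ n : ℕ, ε / Λ ^ (n + 1) ≤ ρ ∧ ρ ≤ Λ * (ε / Λ ^ (n + 1)) := by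
  have hΛ₀ : 0 < Λ := one_pos.trans hΛ
  obtain ⟨n, hn, hn'⟩ := exists_nat_pow_near ((one_le_div hρ).2 hρε) hΛ
  refine ⟨n, ((div_lt_comm₀ hρ (pow_pos hΛ₀ _)).1 hn').le, ?_⟩
  calc ρ ≤ ε / Λ ^ n := (le_div_comm₀ (pow_pos hΛ₀ n) hρ).1 hn
    _ = Λ * (ε / Λ ^ (n + 1)) := by rw [pow_succ]; field_simp

lemma tendsto_mul_norm_sub_rpow_nhds_zero {E : Type*} [SeminormedAddCommGroup E] (a : E) (C : ℝ)
    {α : ℝ} (hα : 0 < α) : Tendsto (fun u : E ↦ C * ‖u - a‖ ^ α) (nhds a) (nhds 0) := by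
  have hcont : Continuous fun u : E ↦ C * ‖u - a‖ ^ α :=
    continuous_const.mul ((continuous_id.sub continuous_const).norm.rpow_const fun _ ↦ .inr hα.le)
  simpa [Real.zero_rpow hα.ne'] using hcont.tendsto a

section NormedField

variable {𝕜 : Type*} [NormedField 𝕜]

lemma tendsto_of_norm_div_sub_one_le {X : Type*} {l : Filter X} {g : X → 𝕜} {τ : 𝕜} {e : X → ℝ}
    (hτ : τ ≠ 0) (he : Tendsto e l (nhds 0)) (hge : ∀ᶠ x in l, ‖g x / τ - 1‖ ≤ e x) :
    Tendsto g l (nhds τ) := by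
  have quotient_tendsto : Tendsto (fun x ↦ g x / τ) l (nhds 1) :=
    tendsto_iff_norm_sub_tendsto_zero.2
      (squeeze_zero' (Eventually.of_forall fun _ ↦ norm_nonneg _) hge he)
  simpa only [div_mul_cancel₀ _ hτ, one_mul] using quotient_tendsto.mul_const τ

variable [CompleteSpace 𝕜]

lemma tendsto_div_tprod_of_summable {w : ℕ → 𝕜} (hw : ∀ n, w n ≠ 0)
    (hsum : Summable fun n ↦ ‖w n / w (n + 1) - 1‖) :
    Tendsto (fun n ↦ w 0 / w n) atTop (nhds (∏' n, (1 + (w n / w (n + 1) - 1)))) := by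
  have hprod := (multipliable_one_add_of_summable hsum).hasProd.tendsto_prod_nat
  simpa only [add_sub_cancel, prod_range_div_succ hw] using hprod

lemma exists_ne_zero_tendsto_of_summable_norm_div_sub_one {w : ℕ → 𝕜} (hw : ∀ n, w n ≠ 0)
    (hsum : Summable fun n ↦ ‖w n / w (n + 1) - 1‖) :
    ∃ τ ≠ 0, Tendsto w atTop (nhds τ) := by
  have tprod_ne_zero : ∏' n, (1 + (w n / w (n + 1) - 1)) ≠ 0 :=
    tprod_one_add_ne_zero_of_summable
      (fun n ↦ by simpa only [add_sub_cancel] using div_ne_zero (hw n) (hw (n + 1))) hsum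
  refine ⟨_, div_ne_zero (hw 0) tprod_ne_zero, ?_⟩
  simpa only [Pi.div_def, div_div_cancel₀ (hw 0)] using
    (tendsto_const_nhds (x := w 0)).div (tendsto_div_tprod_of_summable hw hsum) tprod_ne_zero

lemma norm_div_sub_one_le_of_tendsto {w : ℕ → 𝕜} {τ : 𝕜} {d : ℕ → ℝ} {S : ℝ} (hw : ∀ n, w n ≠ 0)
    (hτ : τ ≠ 0) (hlim : Tendsto w atTop (nhds τ)) (hd : HasSum d S)
    (hwd : ∀ n, ‖w n / w (n + 1) - 1‖ ≤ d n) :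
    ‖w 0 / τ - 1‖ ≤ Real.exp S - 1 := by
  have hsum : Summable fun n ↦ ‖w n / w (n + 1) - 1‖ :=
    hd.summable.of_nonneg_of_le (fun _ ↦ norm_nonneg _) hwd
  have tprod_eq : ∏' n, (1 + (w n / w (n + 1) - 1)) = w 0 / τ :=
    tendsto_nhds_unique (tendsto_div_tprod_of_summable hw hsum) (tendsto_const_nhds.div hlim hτ)
  exact tprod_eq ▸ norm_tprod_one_add_sub_one_le hd hwd

lemma exists_ne_zero_norm_div_sub_one_le_of_geometric {w : ℕ → 𝕜} {K q : ℝ} (hq₀ : 0 ≤ q)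
    (hq₁ : q < 1) (hw : ∀ n, w n ≠ 0) (hratio : ∀ n, ‖w n / w (n + 1) - 1‖ ≤ K * q ^ n) :
    ∃ τ ≠ 0, ∃ B : ℝ, 0 < B ∧ ∀ m, ‖w m / τ - 1‖ ≤ B * q ^ m := by
  have hgeom (A : ℝ) : HasSum (fun n ↦ A * q ^ n) (A / (1 - q)) :=
    (hasSum_geometric_of_lt_one hq₀ hq₁).mul_left A
  have hK : 0 ≤ K := by simpa using (norm_nonneg _).trans (hratio 0)
  set S := K / (1 - q) with hS
  have hS₀ : 0 ≤ S := div_nonneg hK (sub_nonneg.2 hq₁.le)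
  obtain ⟨τ, hτ, hlim⟩ := exists_ne_zero_tendsto_of_summable_norm_div_sub_one hw
    ((hgeom K).summable.of_nonneg_of_le (fun _ ↦ norm_nonneg _) hratio)
  refine ⟨τ, hτ, Real.exp S * S + 1, by positivity, fun m ↦ ?_⟩
  have tail_ratio (n : ℕ) : ‖w (n + m) / w (n + 1 + m) - 1‖ ≤ K * q ^ m * q ^ n := by
    simpa only [add_right_comm n 1 m, mul_assoc, ← pow_add, add_comm m n] using hratio (n + m)
  calc ‖w m / τ - 1‖ = ‖w (0 + m) / τ - 1‖ := by rw [zero_add]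
    _ ≤ Real.exp (K * q ^ m / (1 - q)) - 1 :=
        norm_div_sub_one_le_of_tendsto (w := fun n ↦ w (n + m)) (fun n ↦ hw (n + m)) hτ
          ((tendsto_add_atTop_iff_nat m).2 hlim) (hgeom _) tail_ratio
    _ = Real.exp (S * q ^ m) - 1 := by rw [hS, div_mul_eq_mul_div]
    _ ≤ Real.exp S * (S * q ^ m) :=
        exp_mul_sub_one_le hS₀ (pow_nonneg hq₀ m) (pow_le_one₀ hq₀ hq₁.le)
    _ ≤ (Real.exp S * S + 1) * q ^ m := by
        rw [← mul_assoc]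
        gcongr
        exact le_add_of_nonneg_right zero_le_one

section Scales

variable {X : Type*} {s : Set X} {ρ : X → ℝ} {g : X → 𝕜} {α C ε Λ : ℝ}

lemma exists_ne_zero_norm_div_sub_one_le_on_spheres (hα : 0 < α) (hε : 0 < ε) (hΛ : 1 < Λ)
    {z : ℕ → X} (hzs : ∀ n, z n ∈ s) (hz : ∀ n, ρ (z n) = ε / Λ ^ (n + 1))
    (hg : ∀ x ∈ s, g x ≠ 0)
    (hratio : ∀ x ∈ s, ∀ y ∈ s, ρ y ≤ ρ x → ρ x ≤ Λ * ρ y →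
      ‖g x / g y - 1‖ ≤ C * ρ x ^ α) :
    ∃ τ ≠ 0, ∃ B : ℝ, 0 < B ∧ ∀ n, ‖g (z n) / τ - 1‖ ≤ B * ρ (z n) ^ α := by
  have hΛ₀ : 0 < Λ := one_pos.trans hΛ
  have hscale (n : ℕ) : ρ (z n) ^ α = (ε / Λ) ^ α * (Λ ^ α)⁻¹ ^ n := by
    rw [hz, div_pow_succ_rpow hε.le hΛ₀.le]
  have hstep (n : ℕ) : ρ (z n) = Λ * ρ (z (n + 1)) := by
    rw [hz, hz, pow_succ _ (n + 1)]
    field_simp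
  have hρ (n : ℕ) : 0 < ρ (z n) := by rw [hz]; positivity
  obtain ⟨τ, hτ, B, hB, hgτ⟩ := exists_ne_zero_norm_div_sub_one_le_of_geometric
    (w := fun n ↦ g (z n)) (K := C * (ε / Λ) ^ α) (q := (Λ ^ α)⁻¹) (by positivity)
    (inv_lt_one_of_one_lt₀ (Real.one_lt_rpow hΛ hα)) (fun n ↦ hg _ (hzs n)) fun n ↦ by
      rw [mul_assoc, ← hscale]
      exact hratio _ (hzs n) _ (hzs (n + 1))
        (hstep n ▸ le_mul_of_one_le_left (hρ (n + 1)).le hΛ.le) (hstep n).le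
  refine ⟨τ, hτ, B / (ε / Λ) ^ α, by positivity, fun n ↦ (hgτ n).trans_eq ?_⟩
  rw [hscale]
  field_simp

theorem exists_ne_zero_norm_div_sub_one_le_rpow (hα : 0 < α) (hε : 0 < ε) (hΛ : 1 < Λ)
    (hs : ∀ x ∈ s, ρ x ∈ Set.Ioc 0 ε)
    (hspheres : ∀ n : ℕ, ∃ z ∈ s, ρ z = ε / Λ ^ (n + 1))
    (hg : ∀ x ∈ s, g x ≠ 0)
    (hratio : ∀ x ∈ s, ∀ y ∈ s, ρ y ≤ ρ x → ρ x ≤ Λ * ρ y →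
      ‖g x / g y - 1‖ ≤ C * ρ x ^ α) :
    ∃ τ ≠ 0, ∃ C' : ℝ, 0 < C' ∧ ∀ x ∈ s, ‖g x / τ - 1‖ ≤ C' * ρ x ^ α := by
  choose z hzs hz using hspheres
  obtain ⟨τ, hτ, B, hB, hgτ⟩ :=
    exists_ne_zero_norm_div_sub_one_le_on_spheres hα hε hΛ hzs hz hg hratio
  have hC : 0 ≤ C := by
    have self_ratio := (norm_nonneg _).trans <| hratio _ (hzs 0) _ (hzs 0) le_rfl
      (le_mul_of_one_le_left (hs _ (hzs 0)).1.le hΛ.le)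
    exact nonneg_of_mul_nonneg_left self_ratio (Real.rpow_pos_of_pos (hs _ (hzs 0)).1 α)
  refine ⟨τ, hτ, C + B + C * ε ^ α * B, by positivity, fun x hx ↦ ?_⟩
  obtain ⟨hx₀, hxε⟩ := hs x hx
  obtain ⟨n, hzx, hxz⟩ := exists_div_pow_succ_le_and_le_mul hΛ hx₀ hxε
  rw [← hz] at hzx hxz
  have point_to_sphere : ‖g x / g (z n) - 1‖ ≤ C * ρ x ^ α := hratio x hx _ (hzs n) hzx hxz
  have sphere_to_limit : ‖g (z n) / τ - 1‖ ≤ B * ρ x ^ α := by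
    grw [hgτ n, Real.rpow_le_rpow (hs _ (hzs n)).1.le hzx hα.le]
  calc ‖g x / τ - 1‖ = ‖g x / g (z n) * (g (z n) / τ) - 1‖ := by
        rw [div_mul_div_cancel₀ (hg _ (hzs n))]
    _ ≤ C * ρ x ^ α + B * ρ x ^ α + C * ρ x ^ α * (B * ρ x ^ α) := by
        grw [norm_mul_sub_one_le, point_to_sphere, sphere_to_limit]
    _ ≤ C * ρ x ^ α + B * ρ x ^ α + C * ε ^ α * (B * ρ x ^ α) := by gcongr
    _ = (C + B + C * ε ^ α * B) * ρ x ^ α := by ring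

end Scales

theorem ratio_distortion_implies_conformal_general
    (M : Set 𝕜) (a b : 𝕜) (h : 𝕜 → 𝕜) (α C ε₀ Λ : ℝ)
    (hα : 0 < α) (hε₀ : 0 < ε₀) (hΛ : 1 < Λ)
    (hspheres : ∀ n : ℕ, ∃ z ∈ M, ‖z - a‖ = ε₀ / Λ ^ (n + 1))
    (hne : ∀ u ∈ M, 0 < ‖u - a‖ → ‖u - a‖ ≤ ε₀ → h u ≠ b)
    (hdist : ∀ u ∈ M, ∀ v ∈ M, 0 < ‖v - a‖ →
      ‖v - a‖ ≤ ‖u - a‖ → ‖u - a‖ ≤ ε₀ →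
      ‖u - a‖ ≤ Λ * ‖v - a‖ →
      ‖(h u - b) * (v - a) / ((h v - b) * (u - a)) - 1‖ ≤
        C * ‖u - a‖ ^ α) :
    ∃ τ : 𝕜, τ ≠ 0 ∧ (∃ C' : ℝ, 0 < C' ∧ ∀ u ∈ M, 0 < ‖u - a‖ →
      ‖u - a‖ ≤ ε₀ →
      ‖(h u - b) / (τ * (u - a)) - 1‖ ≤ C' * ‖u - a‖ ^ α) ∧
      Tendsto (fun u : 𝕜 => (h u - b) / (u - a)) (nhdsWithin a (M \ {a})) (nhds τ) := by
  have hspheres' (n : ℕ) : ∃ z ∈ {u ∈ M | ‖u - a‖ ∈ Set.Ioc 0 ε₀}, ‖z - a‖ = ε₀ / Λ ^ (n + 1) := by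
    obtain ⟨z, hzM, hz⟩ := hspheres n
    have hz₀ : 0 < ‖z - a‖ := hz ▸ div_pos hε₀ (pow_pos (one_pos.trans hΛ) _)
    exact ⟨z, ⟨hzM, hz₀, hz ▸ div_le_self hε₀.le (one_le_pow₀ hΛ.le)⟩, hz⟩
  obtain ⟨τ, hτ, C', hC', hbound⟩ := exists_ne_zero_norm_div_sub_one_le_rpow
    (g := fun u ↦ (h u - b) / (u - a)) hα hε₀ hΛ (fun u hu ↦ hu.2) hspheres'
    (fun u ⟨hu, hu₀, huε⟩ ↦ div_ne_zero (sub_ne_zero.2 (hne u hu hu₀ huε)) (norm_pos_iff.1 hu₀))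
    (fun u ⟨hu, _, huε⟩ v ⟨hv, hv₀, _⟩ hvu huv ↦ by
      simpa only [div_div_div_eq, mul_comm (u - a)] using hdist u hu v hv hv₀ hvu huε huv)
  refine ⟨τ, hτ, ⟨C', hC', fun u hu hu₀ huε ↦ ?_⟩, ?_⟩
  · simpa only [div_div, mul_comm τ] using hbound u ⟨hu, hu₀, huε⟩
  · refine tendsto_of_norm_div_sub_one_le hτ
      ((tendsto_mul_norm_sub_rpow_nhds_zero a C' hα).mono_left nhdsWithin_le_nhds) ?_
    filter_upwards [self_mem_nhdsWithin,
      mem_nhdsWithin_of_mem_nhds (Metric.closedBall_mem_nhds a hε₀)] with u hu huε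
    exact hbound u ⟨hu.1, norm_pos_iff.2 (sub_ne_zero.2 hu.2), mem_closedBall_iff_norm.1 huε⟩

end NormedField

/-- **Bounded ratio distortion at all scales implies `C^{1+α}`-conformality at a point.**
If around `a` the set `M` meets every small circle, `h − b` does not vanish on
`M ∩ (closedBall a ε₀ \ {a})`, and the ratio distortion of `h` about `a` in every scale
`ε ≤ ε₀` is of order `ε^α` (for pairs of points at comparable distances from `a`), then
there is `τ ≠ 0` with `h(u) = b + τ (u − a)(1 + O(|u − a|^α))` on `M`; in particular
`(h(u) − b)/(u − a) → τ` as `u → a` within `M`. -/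
theorem ratio_distortion_implies_conformal
    (M : Set ℂ) (a b : ℂ) (h : ℂ → ℂ) (α C ε₀ : ℝ)
    (hα : 0 < α) (hC : 0 < C) (hε₀ : 0 < ε₀)
    (hcircles : ∀ r : ℝ, 0 < r → r < ε₀ → ∃ z ∈ M, ‖z - a‖ = r)
    (hne : ∀ u ∈ M, 0 < ‖u - a‖ → ‖u - a‖ ≤ ε₀ → h u ≠ b)
    (hdist : ∀ u ∈ M, ∀ v ∈ M, 0 < ‖v - a‖ →
      ‖v - a‖ ≤ ‖u - a‖ → ‖u - a‖ ≤ ε₀ →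
      ‖u - a‖ ≤ 2 * ‖v - a‖ →
      ‖(h u - b) * (v - a) / ((h v - b) * (u - a)) - 1‖ ≤
        C * ‖u - a‖ ^ α) :
    ∃ τ : ℂ, τ ≠ 0 ∧ (∃ C' : ℝ, 0 < C' ∧ ∀ u ∈ M, 0 < ‖u - a‖ →
      ‖u - a‖ ≤ ε₀ →
      ‖(h u - b) / (τ * (u - a)) - 1‖ ≤ C' * ‖u - a‖ ^ α) ∧
      Tendsto (fun u : ℂ => (h u - b) / (u - a)) (nhdsWithin a (M \ {a})) (nhds τ) := by
  exact ratio_distortion_implies_conformal_general M a b h α C ε₀ 2 hα hε₀ one_lt_two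
    (fun n ↦ hcircles _ (by positivity) (div_lt_self hε₀ (one_lt_pow₀ one_lt_two n.succ_ne_zero)))
    hne hdist
end

section
/- Cauchy Inequality in complex Banach spaces: let B and D be complex Banach spaces and let f be a complex analytic map from the open unit ball of B to D with f(0) = 0 and f(x) ∈ ball(0,1) ⊆ D for every x in the open unit ball of B. Then the Fréchet derivative satisfies ‖Df(0)‖ ≤ 1, and more generally ‖Df(x)‖ ≤ 1/(1 − ‖x‖) for every x in the open unit ball of B. -/
open Metric

/-!
For `‖v‖ < R` the slice `z ↦ f (c + z • v)` of a map on `ball c R` is holomorphic on a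
neighbourhood of the closed unit disc of `ℂ`, so Cauchy's estimate in one variable bounds
`Df(c) v` by the radius of any closed ball containing the image of `f`. Taking the supremum over
`v` bounds `‖Df(c)‖` itself, and an off-centre point `x` is the centre of the smaller ball
`ball x (R - dist x c) ⊆ ball c R`.
-/

theorem opNorm_le_div_of_mapsTo_ball {𝕜 E F : Type*} [RCLike 𝕜]
    [SeminormedAddCommGroup E] [NormedSpace 𝕜 E] [SeminormedAddCommGroup F] [NormedSpace 𝕜 F]
    {L : E →L[𝕜] F} {R C : ℝ} (hR : 0 < R)
    (hL : Set.MapsTo L (ball 0 R) (closedBall 0 C)) : ‖L‖ ≤ C / R := by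
  let : NormedSpace ℝ E := .restrictScalars ℝ 𝕜 E
  have hL_closed : Set.MapsTo L (closedBall 0 R) (closedBall 0 C) := by
    simpa only [closure_ball _ hR.ne', isClosed_closedBall.closure_eq]
      using hL.closure L.continuous
  have hC : 0 ≤ C := nonempty_closedBall.mp ⟨_, hL (mem_ball_self hR)⟩
  refine L.opNorm_le_of_unit_norm (by positivity) fun u hu ↦ ?_
  have hRu : ‖L ((R : 𝕜) • u)‖ ≤ C := by
    simpa using hL_closed (show (R : 𝕜) • u ∈ closedBall 0 R by simp [norm_smul, hu, abs_of_pos hR])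
  rwa [le_div_iff₀' hR, ← RCLike.norm_of_nonneg (K := 𝕜) hR.le, ← norm_smul, ← map_smul]

section CauchyEstimate

variable {E F : Type*} [NormedAddCommGroup E] [NormedSpace ℂ E]
  [NormedAddCommGroup F] [NormedSpace ℂ F] {f : E → F} {c : E} {a : F} {R C : ℝ}

theorem norm_fderiv_apply_le_of_mapsTo_ball (hf : DifferentiableOn ℂ f (ball c R))
    (hmaps : Set.MapsTo f (ball c R) (closedBall a C)) {v : E} (hv : ‖v‖ < R) :
    ‖fderiv ℂ f c v‖ ≤ C := by
  have h_slice : Set.MapsTo (fun z : ℂ ↦ c + z • v) (closedBall 0 1) (ball c R) := by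
    intro z hz
    have hzv : ‖z‖ * ‖v‖ ≤ ‖v‖ :=
      mul_le_of_le_one_left (norm_nonneg v) (mem_closedBall_zero_iff.mp hz)
    simpa [norm_smul] using hzv.trans_lt hv
  have h_diff : DifferentiableOn ℂ (fun z : ℂ ↦ f (c + z • v) - a) (closedBall 0 1) :=
    (hf.comp (by fun_prop) h_slice).sub_const a
  have h_deriv : deriv (fun z : ℂ ↦ f (c + z • v) - a) 0 = fderiv ℂ f c v := by
    have hfc : DifferentiableAt ℂ f c :=
      hf.differentiableAt (ball_mem_nhds c ((norm_nonneg v).trans_lt hv))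
    rw [deriv_sub_const, ← hfc.lineDeriv_eq_fderiv, lineDeriv]
  have h_bound : ∀ z ∈ sphere (0 : ℂ) 1, ‖f (c + z • v) - a‖ ≤ C := fun z hz ↦
    mem_closedBall_iff_norm.mp (hmaps (h_slice (sphere_subset_closedBall hz)))
  simpa only [h_deriv, div_one] using Complex.norm_deriv_le_of_forall_mem_sphere_norm_le one_pos
    (h_diff.diffContOnCl_ball subset_rfl) h_bound

theorem norm_fderiv_center_le_div_of_mapsTo_ball (hR : 0 < R)
    (hf : DifferentiableOn ℂ f (ball c R))
    (hmaps : Set.MapsTo f (ball c R) (closedBall a C)) :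
    ‖fderiv ℂ f c‖ ≤ C / R :=
  opNorm_le_div_of_mapsTo_ball hR fun _ hv ↦ mem_closedBall_zero_iff.mpr
    (norm_fderiv_apply_le_of_mapsTo_ball hf hmaps (mem_ball_zero_iff.mp hv))

theorem cauchy_inequality_banach_general (hf : DifferentiableOn ℂ f (ball c R))
    (hmaps : Set.MapsTo f (ball c R) (closedBall a C)) {x : E} (hx : x ∈ ball c R) :
    ‖fderiv ℂ f x‖ ≤ C / (R - dist x c) := by
  have h_sub : ball x (R - dist x c) ⊆ ball c R := ball_subset_ball' (by simp)
  exact norm_fderiv_center_le_div_of_mapsTo_ball (sub_pos.mpr hx) (hf.mono h_sub)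
    (hmaps.mono_left h_sub)

end CauchyEstimate

/-- **Cauchy Inequality in complex Banach spaces.** If `f` is complex analytic from the open
unit ball of `B` to `D`, `f(0) = 0`, and `f` maps the unit ball into the open unit ball of
`D`, then `‖Df(0)‖ ≤ 1` and more generally `‖Df(x)‖ ≤ 1/(1 − ‖x‖)` on the unit ball. -/
theorem cauchy_inequality_banach
    {B D : Type*} [NormedAddCommGroup B] [NormedSpace ℂ B] [CompleteSpace B]
    [NormedAddCommGroup D] [NormedSpace ℂ D] [CompleteSpace D]
    (f : B → D) (hf : AnalyticOnNhd ℂ f (Metric.ball (0 : B) 1))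
    (hf0 : f 0 = 0)
    (hmap : ∀ x ∈ Metric.ball (0 : B) 1, f x ∈ Metric.ball (0 : D) 1) :
    ‖fderiv ℂ f 0‖ ≤ 1 ∧
      ∀ x ∈ Metric.ball (0 : B) 1, ‖fderiv ℂ f x‖ ≤ 1 / (1 - ‖x‖) := by
  have h_bound : ∀ x ∈ ball (0 : B) 1, ‖fderiv ℂ f x‖ ≤ 1 / (1 - ‖x‖) := fun x hx ↦ by
    simpa only [dist_zero_right] using cauchy_inequality_banach_general hf.differentiableOn
      (fun y hy ↦ ball_subset_closedBall (hmap y hy)) hx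
  exact ⟨by simpa using h_bound 0 (mem_ball_self one_pos), h_bound⟩
end

section
/- Schwarz Lemma in complex Banach spaces: let 0 < r < 1/2, let B and D be complex Banach spaces, and let f be a complex analytic map from the open unit ball of B to D with f(0) = 0 and f(x) ∈ ball(0, r) ⊆ D for every x in the open unit ball of B. Then the restriction of f to the ball of radius r is a uniform contraction: ‖f(x) − f(y)‖ ≤ q·‖x − y‖ for all x, y ∈ ball(0, r) ⊆ B, where q = r/(1 − r) < 1. -/
open Metric

/-!
Cauchy's estimate, applied on complex lines, bounds the derivative of a holomorphic map on a ball
by the radius of a ball containing its values divided by the radius of its domain. A point at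
distance at most `ρ` from the center of a ball of radius `R` is itself the center of a ball of
radius `R - ρ` inside it, so the derivative is bounded there by `C / (R - ρ)`, and the mean value
inequality on the convex ball of radius `ρ` turns this into a Lipschitz estimate.
-/

section CauchyEstimate

open Filter Set
open scoped Topology

variable {E F : Type*} [NormedAddCommGroup E] [NormedSpace ℂ E]
  [NormedAddCommGroup F] [NormedSpace ℂ F] {b : F} {C R ρ : ℝ}

theorem norm_deriv_le_div_of_mapsTo_closedBall {f : ℂ → F} {c : ℂ} (hR : 0 < R)
    (hd : DifferentiableOn ℂ f (ball c R)) (hf : MapsTo f (ball c R) (closedBall b C)) :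
    ‖deriv f c‖ ≤ C / R := by
  have hlim : Tendsto (fun s : ℝ ↦ C / s) (𝓝[<] R) (𝓝 (C / R)) :=
    (tendsto_const_nhds.div tendsto_id hR.ne').mono_left nhdsWithin_le_nhds
  refine ge_of_tendsto hlim ?_
  filter_upwards [Ioo_mem_nhdsLT hR] with s ⟨hs, hsR⟩
  have hsub : closedBall c s ⊆ ball c R := closedBall_subset_ball hsR
  have hcauchy := Complex.norm_deriv_le_of_forall_mem_sphere_norm_le hs
    ((hd.sub_const b).diffContOnCl_ball hsub)
    fun z hz ↦ mem_closedBall_iff_norm.1 (hf (hsub (sphere_subset_closedBall hz)))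
  simpa only [deriv_sub_const_fun] using hcauchy

theorem norm_fderiv_le_div_of_mapsTo_closedBall {f : E → F} {c : E} (hR : 0 < R)
    (hd : DifferentiableOn ℂ f (ball c R)) (hf : MapsTo f (ball c R) (closedBall b C)) :
    ‖fderiv ℂ f c‖ ≤ C / R := by
  have hC : 0 ≤ C := nonempty_closedBall.1 ⟨_, hf (mem_ball_self hR)⟩
  refine ContinuousLinearMap.opNorm_le_bound _ (by positivity) fun v ↦ ?_
  rcases eq_or_ne v 0 with rfl | hv
  · simp
  have hv : 0 < ‖v‖ := norm_pos_iff.2 hv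
  have hline : MapsTo (fun t : ℂ ↦ c + t • v) (ball 0 (R / ‖v‖)) (ball c R) := fun t ht ↦ by
    simpa [norm_smul, lt_div_iff₀ hv] using ht
  calc ‖fderiv ℂ f c v‖ = ‖deriv (fun t : ℂ ↦ f (c + t • v)) 0‖ := by
        rw [← (hd.differentiableAt (ball_mem_nhds c hR)).lineDeriv_eq_fderiv, lineDeriv]
    _ ≤ C / (R / ‖v‖) := norm_deriv_le_div_of_mapsTo_closedBall (div_pos hR hv)
        (hd.comp (by fun_prop) hline) (hf.comp hline)
    _ = C / R * ‖v‖ := by field_simp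

theorem norm_fderiv_le_div_sub_of_mapsTo_closedBall {f : E → F} {c x : E} (hρ : ρ < R)
    (hd : DifferentiableOn ℂ f (ball c R)) (hf : MapsTo f (ball c R) (closedBall b C))
    (hx : x ∈ closedBall c ρ) : ‖fderiv ℂ f x‖ ≤ C / (R - ρ) := by
  have hsub : ball x (R - ρ) ⊆ ball c R :=
    ball_subset_ball' (by linarith [mem_closedBall.1 hx])
  exact norm_fderiv_le_div_of_mapsTo_closedBall (sub_pos.2 hρ) (hd.mono hsub) (hf.mono_left hsub)

theorem norm_sub_le_div_sub_mul_of_mapsTo_closedBall {f : E → F} {c x y : E} (hρ : ρ < R)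
    (hd : DifferentiableOn ℂ f (ball c R)) (hf : MapsTo f (ball c R) (closedBall b C))
    (hx : x ∈ closedBall c ρ) (hy : y ∈ closedBall c ρ) :
    ‖f x - f y‖ ≤ C / (R - ρ) * ‖x - y‖ :=
  (convex_closedBall c ρ).norm_image_sub_le_of_norm_fderiv_le
    (fun _ hz ↦ hd.differentiableAt (isOpen_ball.mem_nhds (closedBall_subset_ball hρ hz)))
    (fun _ hz ↦ norm_fderiv_le_div_sub_of_mapsTo_closedBall hρ hd hf hz) hy hx

theorem schwarz_lemma_banach_general {f : E → F} {c : E} (hC : 0 ≤ C) (hCR : C + ρ < R)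
    (hd : DifferentiableOn ℂ f (ball c R)) (hf : MapsTo f (ball c R) (closedBall b C)) :
    C / (R - ρ) < 1 ∧
      ∀ x ∈ closedBall c ρ, ∀ y ∈ closedBall c ρ, ‖f x - f y‖ ≤ C / (R - ρ) * ‖x - y‖ := by
  have hρ : ρ < R := by linarith
  exact ⟨(div_lt_one (sub_pos.2 hρ)).2 (by linarith), fun _ hx _ hy ↦
    norm_sub_le_div_sub_mul_of_mapsTo_closedBall hρ hd hf hx hy⟩

end CauchyEstimate

/-- **Schwarz Lemma in complex Banach spaces.** Let `0 < r < 1/2` and let `f` be a complex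
analytic map from the open unit ball of `B` to `D` with `f(0) = 0` and `f(x) ∈ ball(0, r)`
for every `x` in the unit ball.  Then on `ball(0, r)` the map `f` is a uniform contraction
with constant `q = r/(1 − r) < 1`. -/
theorem schwarz_lemma_banach
    {B D : Type*} [NormedAddCommGroup B] [NormedSpace ℂ B] [CompleteSpace B]
    [NormedAddCommGroup D] [NormedSpace ℂ D] [CompleteSpace D]
    (r : ℝ) (hr0 : 0 < r) (hr : r < 1 / 2)
    (f : B → D) (hf : AnalyticOnNhd ℂ f (Metric.ball (0 : B) 1))
    (hf0 : f 0 = 0)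
    (hmap : ∀ x ∈ Metric.ball (0 : B) 1, f x ∈ Metric.ball (0 : D) r) :
    r / (1 - r) < 1 ∧
      ∀ x ∈ Metric.ball (0 : B) r, ∀ y ∈ Metric.ball (0 : B) r,
        ‖f x - f y‖ ≤ r / (1 - r) * ‖x - y‖ :=
  have ⟨hlt, hle⟩ := schwarz_lemma_banach_general hr0.le (by linarith) hf.differentiableOn
    fun x hx ↦ ball_subset_closedBall (hmap x hx)
  ⟨hlt, fun x hx y hy ↦ hle x (ball_subset_closedBall hx) y (ball_subset_closedBall hy)⟩
end

section
/- Local extension of smooth holomorphic motions: let B be a complex Banach space, Λ ⊆ B an open set containing 0, Q ⊆ ℂ a compact set, and U ⊆ ℂ an open neighborhood of Q. Let h : Λ × U → ℂ be a smooth holomorphic motion of U over (Λ, 0): h(0, z) = z for all z ∈ U; for each λ ∈ Λ the map z ↦ h(λ, z) is injective on U; h is infinitely differentiable as a map on the open subset Λ × U of B × ℂ; and for each fixed z ∈ U the map λ ↦ h(λ, z) is complex analytic on Λ. Then there exist an open neighborhood Λ′ ⊆ Λ of 0 and a map H : Λ′ × ℂ → ℂ such that: H is infinitely differentiable on Λ′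 × ℂ; for each fixed z ∈ ℂ the map λ ↦ H(λ, z) is complex analytic on Λ′; H(0, z) = z for all z ∈ ℂ; for each λ ∈ Λ′ the map z ↦ H(λ, z) is a diffeomorphism of ℂ onto itself; and H(λ, z) = h(λ, z) for all λ ∈ Λ′ and all z ∈ Q. -/
open Filter

/-!
Let `χ` be a smooth cut-off function, compactly supported in `U` and equal to `1` on `Q`.
The interpolation `H(λ, z) = z + χ(z) (h(λ, z) - z)` is globally defined, agrees with `h` on `Q`,
and inherits smoothness in `(λ, z)` and analyticity in `λ` from `h`.
Since `H(0, ·) = id` and `H(λ, ·)` moves only points of the compact set `supp χ`,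
its derivative in `z` is uniformly close to the identity for `λ` near `0`,
and a self-map of a Banach space whose derivative stays at distance at most `c < 1` from the
identity is a diffeomorphism.
-/

open Function Set
open scoped ContDiff NNReal Topology

section DiffeomorphismsCloseToIdentity

theorem isInvertible_of_norm_sub_id_lt_one {𝕜 E : Type*} [NontriviallyNormedField 𝕜]
    [NormedAddCommGroup E] [NormedSpace 𝕜 E] [CompleteSpace E] {A : E →L[𝕜] E}
    (hA : ‖A - ContinuousLinearMap.id 𝕜 E‖ < 1) : A.IsInvertible := by
  have hunit : IsUnit A := by
    simpa using isUnit_one_sub_of_norm_lt_one (x := 1 - A) (by rwa [norm_sub_rev])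
  exact ⟨.unitsEquiv 𝕜 E hunit.unit, rfl⟩

variable {𝕜 E : Type*} [RCLike 𝕜] [NormedAddCommGroup E] [NormedSpace 𝕜 E]

theorem approximatesLinearOn_univ_of_norm_fderiv_sub_le {F : Type*} [NormedAddCommGroup F]
    [NormedSpace 𝕜 F] {f : E → F} {A : E →L[𝕜] F} {c : ℝ≥0} (hf : Differentiable 𝕜 f)
    (hbound : ∀ x, ‖fderiv 𝕜 f x - A‖ ≤ c) : ApproximatesLinearOn f A univ c := by
  let _ : NormedSpace ℝ E := .restrictScalars ℝ 𝕜 E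
  intro x _ y _
  exact convex_univ.norm_image_sub_le_of_norm_fderiv_le' (fun z _ => hf z) (fun z _ => hbound z)
    (mem_univ y) (mem_univ x)

variable [CompleteSpace E]

theorem exists_homeomorph_of_norm_fderiv_sub_id_le {f : E → E} {c : ℝ≥0} (hc : c < 1)
    (hf : Differentiable 𝕜 f) (hbound : ∀ x, ‖fderiv 𝕜 f x - ContinuousLinearMap.id 𝕜 E‖ ≤ c) :
    ∃ e : E ≃ₜ E, ⇑e = f := by
  have happrox : ApproximatesLinearOn f (ContinuousLinearEquiv.refl 𝕜 E : E →L[𝕜] E) univ c :=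
    approximatesLinearOn_univ_of_norm_fderiv_sub_le hf hbound
  refine ⟨happrox.toHomeomorph f ?_, rfl⟩
  cases subsingleton_or_nontrivial E with
  | inl hsub => exact .inl hsub
  | inr hnontriv =>
    have hnorm : ‖((ContinuousLinearEquiv.refl 𝕜 E).symm : E →L[𝕜] E)‖₊ = 1 :=
      ContinuousLinearMap.nnnorm_id
    exact .inr (by rwa [hnorm, inv_one])

theorem exists_equiv_contDiff_of_norm_fderiv_sub_id_le {f : E → E} {c : ℝ≥0} {n : WithTop ℕ∞}
    (hc : c < 1) (hn : n ≠ 0) (hf : ContDiff 𝕜 n f)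
    (hbound : ∀ x, ‖fderiv 𝕜 f x - ContinuousLinearMap.id 𝕜 E‖ ≤ c) :
    ∃ e : E ≃ E, ⇑e = f ∧ ContDiff 𝕜 n e ∧ ContDiff 𝕜 n e.symm := by
  have hdiff : Differentiable 𝕜 f := hf.differentiable hn
  obtain ⟨e, rfl⟩ := exists_homeomorph_of_norm_fderiv_sub_id_le hc hdiff hbound
  choose f' hf' using fun x =>
    isInvertible_of_norm_sub_id_lt_one ((hbound x).trans_lt (NNReal.coe_lt_one.2 hc))
  exact ⟨e.toEquiv, rfl, hf,
    e.contDiff_symm (fun x => (hf' x).symm ▸ (hdiff x).hasFDerivAt) hf⟩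

end DiffeomorphismsCloseToIdentity

theorem contDiffAt_smul_of_mem_tsupport {𝕜 E F : Type*} [NontriviallyNormedField 𝕜]
    [NormedAddCommGroup E] [NormedSpace 𝕜 E] [NormedAddCommGroup F] [NormedSpace 𝕜 F]
    {χ : E → 𝕜} {g : E → F} {x : E} {n : WithTop ℕ∞} (hχ : ContDiffAt 𝕜 n χ x)
    (hg : x ∈ tsupport χ → ContDiffAt 𝕜 n g x) : ContDiffAt 𝕜 n (fun y => χ y • g y) x := by
  by_cases hx : x ∈ tsupport χ
  · exact hχ.smul (hg hx)
  · have hzero : (fun y => χ y • g y) =ᶠ[𝓝 x] fun _ => 0 := by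
      filter_upwards [notMem_tsupport_iff_eventuallyEq.1 hx] with y hy
      simp [hy]
    exact contDiffAt_const.congr_of_eventuallyEq hzero

theorem exists_contDiff_hasCompactSupport_eqOn_one {E : Type*} [NormedAddCommGroup E]
    [NormedSpace ℝ E] [FiniteDimensional ℝ E] {K U : Set E} (hK : IsCompact K) (hU : IsOpen U)
    (hKU : K ⊆ U) :
    ∃ χ : E → ℝ, ContDiff ℝ ∞ χ ∧ HasCompactSupport χ ∧ tsupport χ ⊆ U ∧ EqOn χ 1 K := by
  obtain ⟨L, hL, hKL, hLU⟩ := exists_compact_between hK hU hKU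
  obtain ⟨χ, hχ_one, hχ_zero, -⟩ := exists_contMDiffMap_one_nhds_of_subset_interior (n := ⊤)
    (modelWithCornersSelf ℝ E) hK.isClosed hKL
  have hsupp : support χ ⊆ L := fun x hx => by_contra fun hxL => hx (hχ_zero x hxL)
  exact ⟨χ, χ.contMDiff.contDiff, .of_support_subset_isCompact hL hsupp,
    (closure_minimal hsupp hL.isClosed).trans hLU, hχ_one.self_of_nhdsSet⟩

theorem eventually_forall_fderiv_mem_of_isCompact {𝕜 X E F : Type*} [NontriviallyNormedField 𝕜]
    [NormedAddCommGroup X] [NormedSpace 𝕜 X] [NormedAddCommGroup E] [NormedSpace 𝕜 E]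
    [NormedAddCommGroup F] [NormedSpace 𝕜 F] {f : X → E → F} {x₀ : X} {K : Set E}
    {O : Set (E →L[𝕜] F)} (hK : IsCompact K) (hO : IsOpen O)
    (hf : ∀ y ∈ K, ContDiffAt 𝕜 1 (uncurry f) (x₀, y)) (hmem : ∀ y ∈ K, fderiv 𝕜 (f x₀) y ∈ O) :
    ∀ᶠ x in 𝓝 x₀, ∀ y ∈ K, fderiv 𝕜 (f x) y ∈ O := by
  refine hK.eventually_forall_of_forall_eventually fun y hy => ?_
  have hfy : ContDiffAt 𝕜 1 (uncurry fun p : X × E => f p.1) ((x₀, y), y) :=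
    (hf y hy).comp ((x₀, y), y) (contDiffAt_fst.fst.prodMk contDiffAt_snd)
  have hcont : ContinuousAt (fun p : X × E => fderiv 𝕜 (f p.1) p.2) (x₀, y) :=
    (hfy.fderiv (m := 0) contDiffAt_snd (by simp)).continuousAt
  exact hcont.eventually_mem (hO.mem_nhds (hmem y hy))

section CutoffMotion

/-- The cut-off of a motion `h` by a real function `χ`: the interpolation between the identity
(where `χ = 0`) and `h` (where `χ = 1`). The family `h` may take arbitrary values at points where
`χ = 0`, so it is encoded as a total function even if only meaningful on a neighborhood of the
support of `χ`. -/
def cutoffMotion {B E : Type*} [AddCommGroup E] [Module ℝ E] (χ : E → ℝ) (h : B → E → E)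
    (lam : B) (z : E) : E :=
  z + χ z • (h lam z - z)

section Algebra

variable {B E : Type*} [AddCommGroup E] [Module ℝ E] {χ : E → ℝ} {h : B → E → E} {lam : B} {z : E}

theorem cutoffMotion_of_eq_zero (hz : χ z = 0) : cutoffMotion χ h lam z = z := by
  simp [cutoffMotion, hz]

theorem cutoffMotion_of_eq_one (hz : χ z = 1) : cutoffMotion χ h lam z = h lam z := by
  simp [cutoffMotion, hz]

theorem cutoffMotion_eq_id (hid : ∀ z ∈ support χ, h lam z = z) : cutoffMotion χ h lam = id := by
  funext z
  by_cases hz : χ z = 0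
  · exact cutoffMotion_of_eq_zero hz
  · simp [cutoffMotion, hid z hz]

end Algebra

theorem analyticAt_cutoffMotion {𝕜 B E : Type*} [NontriviallyNormedField 𝕜]
    [NormedAddCommGroup B] [NormedSpace 𝕜 B] [NormedAddCommGroup E] [NormedSpace 𝕜 E]
    [NormedSpace ℝ E] [SMulCommClass 𝕜 ℝ E] {χ : E → ℝ} {h : B → E → E} {lam : B} {z : E}
    (hh : z ∈ support χ → AnalyticAt 𝕜 (fun l => h l z) lam) :
    AnalyticAt 𝕜 (fun l => cutoffMotion χ h l z) lam := by
  by_cases hz : χ z = 0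
  · simpa only [cutoffMotion_of_eq_zero hz] using analyticAt_const
  · exact analyticAt_const.add (((hh hz).sub analyticAt_const).const_smul (c := χ z))

variable {B E : Type*} [NormedAddCommGroup E] [NormedSpace ℝ E] {χ : E → ℝ} {h : B → E → E}

theorem fderiv_cutoffMotion_of_notMem_tsupport {lam : B} {z : E} (hz : z ∉ tsupport χ) :
    fderiv ℝ (cutoffMotion χ h lam) z = ContinuousLinearMap.id ℝ E := by
  have hid : cutoffMotion χ h lam =ᶠ[𝓝 z] id := by
    filter_upwards [notMem_tsupport_iff_eventuallyEq.1 hz] with w hw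
    exact cutoffMotion_of_eq_zero hw
  rw [hid.fderiv_eq, fderiv_id]

variable [NormedAddCommGroup B] [NormedSpace ℝ B]

theorem contDiffAt_uncurry_cutoffMotion {lam : B} {z : E} {n : WithTop ℕ∞} (hχ : ContDiff ℝ n χ)
    (hh : z ∈ tsupport χ → ContDiffAt ℝ n (uncurry h) (lam, z)) :
    ContDiffAt ℝ n (uncurry (cutoffMotion χ h)) (lam, z) := by
  have hsupp : tsupport (fun p : B × E => χ p.2) ⊆ Prod.snd ⁻¹' tsupport χ :=
    tsupport_comp_subset_preimage χ continuous_snd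
  exact contDiffAt_snd.add <| contDiffAt_smul_of_mem_tsupport
    (hχ.contDiffAt.comp _ contDiffAt_snd) fun hz => (hh (hsupp hz)).sub contDiffAt_snd

theorem eventually_forall_norm_fderiv_cutoffMotion_sub_id_lt {lam₀ : B} {ε : ℝ} (hε : 0 < ε)
    (hχ : ContDiff ℝ 1 χ) (hsupp : HasCompactSupport χ)
    (hh : ∀ z ∈ tsupport χ, ContDiffAt ℝ 1 (uncurry h) (lam₀, z))
    (hid : ∀ z ∈ support χ, h lam₀ z = z) :
    ∀ᶠ lam in 𝓝 lam₀, ∀ z,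
      ‖fderiv ℝ (cutoffMotion χ h lam) z - ContinuousLinearMap.id ℝ E‖ < ε := by
  have hnear : ∀ᶠ lam in 𝓝 lam₀, ∀ z ∈ tsupport χ,
      fderiv ℝ (cutoffMotion χ h lam) z ∈ Metric.ball (ContinuousLinearMap.id ℝ E) ε :=
    eventually_forall_fderiv_mem_of_isCompact hsupp Metric.isOpen_ball
      (fun z hz => contDiffAt_uncurry_cutoffMotion hχ fun _ => hh z hz)
      fun z _ => by simpa [cutoffMotion_eq_id hid] using hε
  filter_upwards [hnear] with lam hlam z
  by_cases hz : z ∈ tsupport χ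
  · exact mem_ball_iff_norm.1 (hlam z hz)
  · simpa [fderiv_cutoffMotion_of_notMem_tsupport hz] using hε

theorem eventually_exists_equiv_contDiff_cutoffMotion [CompleteSpace E] {lam₀ : B}
    {n : WithTop ℕ∞} (hn : 1 ≤ n) (hχ : ContDiff ℝ n χ) (hsupp : HasCompactSupport χ)
    (hh : ∀ᶠ lam in 𝓝 lam₀, ∀ z ∈ tsupport χ, ContDiffAt ℝ n (uncurry h) (lam, z))
    (hid : ∀ z ∈ support χ, h lam₀ z = z) :
    ∀ᶠ lam in 𝓝 lam₀, ∃ e : E ≃ E,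
      ⇑e = cutoffMotion χ h lam ∧ ContDiff ℝ n e ∧ ContDiff ℝ n e.symm := by
  have hclose := eventually_forall_norm_fderiv_cutoffMotion_sub_id_lt (ε := (1 / 2 : ℝ≥0))
    (by norm_num) (hχ.of_le hn) hsupp (fun z hz => (hh.self_of_nhds z hz).of_le hn) hid
  filter_upwards [hclose, hh] with lam hlam hhlam
  have hsmooth : ContDiff ℝ n (cutoffMotion χ h lam) := contDiff_iff_contDiffAt.2 fun z =>
    (contDiffAt_uncurry_cutoffMotion hχ (hhlam z)).comp z (contDiffAt_const.prodMk contDiffAt_id)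
  exact exists_equiv_contDiff_of_norm_fderiv_sub_id_le (NNReal.half_lt_self one_ne_zero)
    (zero_lt_one.trans_le hn).ne' hsmooth fun z => (hlam z).le

end CutoffMotion

theorem smooth_holomorphic_motion_extension_general
    {B E : Type*} [NormedAddCommGroup B] [NormedSpace ℂ B] [NormedAddCommGroup E] [NormedSpace ℂ E]
    [FiniteDimensional ℂ E] {n : ℕ∞} (hn : 1 ≤ n) {Λ : Set B} (hΛ : IsOpen Λ) {lam₀ : B}
    (hlam₀ : lam₀ ∈ Λ) {Q U : Set E} (hQ : IsCompact Q) (hU : IsOpen U) (hQU : Q ⊆ U)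
    {h : B → E → E} (h_id : ∀ z ∈ U, h lam₀ z = z)
    (h_smooth : ContDiffOn ℝ n (uncurry h) (Λ ×ˢ U))
    (h_holo : ∀ z ∈ U, AnalyticOnNhd ℂ (fun lam => h lam z) Λ) :
    ∃ Λ' : Set B, IsOpen Λ' ∧ lam₀ ∈ Λ' ∧ Λ' ⊆ Λ ∧
      ∃ H : B → E → E,
        ContDiffOn ℝ n (uncurry H) (Λ' ×ˢ univ) ∧
        (∀ z, AnalyticOnNhd ℂ (fun lam => H lam z) Λ') ∧
        (∀ z, H lam₀ z = z) ∧
        (∀ lam ∈ Λ', ∃ e : E ≃ E, ⇑e = H lam ∧ ContDiff ℝ n e ∧ ContDiff ℝ n e.symm) ∧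
        (∀ lam ∈ Λ', ∀ z ∈ Q, H lam z = h lam z) := by
  have : FiniteDimensional ℝ E := .complexToReal E
  have : CompleteSpace E := FiniteDimensional.complete ℂ E
  obtain ⟨χ, hχ_smooth, hχ_compact, hχU, hχ_one⟩ :=
    exists_contDiff_hasCompactSupport_eqOn_one hQ hU hQU
  have hχ : ContDiff ℝ n χ := hχ_smooth.of_le (mod_cast le_top)
  have hsupp : support χ ⊆ U := (subset_tsupport χ).trans hχU
  have h_id' : ∀ z ∈ support χ, h lam₀ z = z := fun z hz => h_id z (hsupp hz)
  have hh : ∀ lam ∈ Λ, ∀ z ∈ tsupport χ, ContDiffAt ℝ n (uncurry h) (lam, z) :=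
    fun lam hlam z hz => h_smooth.contDiffAt ((hΛ.prod hU).mem_nhds ⟨hlam, hχU hz⟩)
  obtain ⟨V, hV, hVo, hV₀⟩ := eventually_nhds_iff.1 <|
    eventually_exists_equiv_contDiff_cutoffMotion (mod_cast hn) hχ hχ_compact
      (eventually_of_mem (hΛ.mem_nhds hlam₀) hh) h_id'
  exact ⟨V ∩ Λ, hVo.inter hΛ, ⟨hV₀, hlam₀⟩, inter_subset_right, cutoffMotion χ h,
    fun p hp => (contDiffAt_uncurry_cutoffMotion hχ (hh p.1 hp.1.2 p.2)).contDiffWithinAt,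
    fun z lam hlam => analyticAt_cutoffMotion fun hz => h_holo z (hsupp hz) lam hlam.2,
    congrFun (cutoffMotion_eq_id h_id'),
    fun lam hlam => hV lam hlam.1,
    fun lam _ z hz => cutoffMotion_of_eq_one (hχ_one hz)⟩

/-- **Local extension of smooth holomorphic motions.**  Let `h` be a smooth holomorphic
motion of an open neighborhood `U` of a compact set `Q ⊆ ℂ` over a pointed open Banach
domain `(Λ, 0)`: `h(0, ·) = id`, each `h(λ, ·)` is injective on `U`, `h` is jointly `C^∞`,
and `h(·, z)` is complex analytic on `Λ` for each `z ∈ U`.  Then there is a smooth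
holomorphic motion `H` of the whole plane `ℂ` over some neighborhood `Λ' ⊆ Λ` of `0`, each
`H(λ, ·)` being a diffeomorphism of `ℂ`, whose restriction to `Q` coincides with `h`. -/
theorem smooth_holomorphic_motion_extension
    {B : Type*} [NormedAddCommGroup B] [NormedSpace ℂ B] [CompleteSpace B]
    (Λ : Set B) (hΛ : IsOpen Λ) (hΛ0 : (0 : B) ∈ Λ)
    (Q : Set ℂ) (hQ : IsCompact Q)
    (U : Set ℂ) (hUopen : IsOpen U) (hQU : Q ⊆ U)
    (h : B → ℂ → ℂ)
    (h_id : ∀ z ∈ U, h 0 z = z)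
    (h_inj : ∀ lam ∈ Λ, Set.InjOn (h lam) U)
    (h_smooth : ContDiffOn ℝ (⊤ : ℕ∞) (fun pr : B × ℂ => h pr.1 pr.2) (Λ ×ˢ U))
    (h_holo : ∀ z ∈ U, AnalyticOnNhd ℂ (fun lam => h lam z) Λ) :
    ∃ Λ' : Set B, IsOpen Λ' ∧ (0 : B) ∈ Λ' ∧ Λ' ⊆ Λ ∧
      ∃ H : B → ℂ → ℂ,
        ContDiffOn ℝ (⊤ : ℕ∞) (fun pr : B × ℂ => H pr.1 pr.2) (Λ' ×ˢ (Set.univ : Set ℂ)) ∧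
        (∀ z : ℂ, AnalyticOnNhd ℂ (fun lam => H lam z) Λ') ∧
        (∀ z : ℂ, H 0 z = z) ∧
        (∀ lam ∈ Λ', ∃ e : ℂ ≃ ℂ, (⇑e = H lam) ∧
          ContDiff ℝ (⊤ : ℕ∞) (⇑e) ∧ ContDiff ℝ (⊤ : ℕ∞) (⇑e.symm)) ∧
        (∀ lam ∈ Λ', ∀ z ∈ Q, H lam z = h lam z) :=
  smooth_holomorphic_motion_extension_general le_top hΛ hΛ0 hQ hUopen hQU h_id h_smooth
    h_holo
end

section
/- Hölder comparison of sup-norms of bounded holomorphic functions on nested domains (a Hadamard three-domains inequality): let V, W, U be nonempty bounded open connected and simply connected subsets of ℂ with closure(V) ⊆ W and closure(W) ⊆ U. Then there exists δ ∈ (0, 1], depending only on V, W, U, such that every holomorphic function f : U → ℂ with sup_{z ∈ U} |f(z)| ≤ 1 satisfies sup_{z ∈ W} |f(z)| ≤ (sup_{z ∈ V} |f(z)|)^δ. -/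
/-!
Precomposing `f` with `w ↦ c + exp w • e`, where `e` is a unit vector, turns Hadamard's three lines
theorem into a three circles theorem, hence into Hölder control of `f` on a ball by `f` on a smaller
concentric ball. Hölder control is transitive, the exponents being multiplied along a chain of
balls, so the points near which `f` is controlled by its values on `V` form a relatively clopen
subset of `U`. Finitely many controlled neighbourhoods cover a compact subset of `U`, and the least
of their exponents serves for all of them.
-/

open Real Set Metric Topology

variable {F : Type*} [NormedAddCommGroup F] [NormedSpace ℂ F]
  {E : Type*} [NormedAddCommGroup E] [NormedSpace ℂ E]

theorem dist_add_exp_smul_self (c : F) {e : F} (he : ‖e‖ = 1) (w : ℂ) :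
    dist (c + Complex.exp w • e) c = exp w.re := by
  rw [dist_self_add_left, norm_smul, Complex.norm_exp, he, mul_one]

open Complex.HadamardThreeLines in
theorem norm_le_interp_of_dist_mem_Icc {f : F → E} {c z : F} {r R a b : ℝ} (hr : 0 < r)
    (hrR : r < R) (hz : dist z c ∈ Icc r R) (hd : DiffContOnCl ℂ f {w | dist w c ∈ Ioo r R})
    (hB : BddAbove ((norm ∘ f) '' {w | dist w c ∈ Icc r R}))
    (ha : ∀ w ∈ sphere c r, ‖f w‖ ≤ a) (hb : ∀ w ∈ sphere c R, ‖f w‖ ≤ b) :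
    ‖f z‖ ≤ a ^ (1 - (log (dist z c) - log r) / (log R - log r)) *
      b ^ ((log (dist z c) - log r) / (log R - log r)) := by
  have hR : 0 < R := hr.trans hrR
  have hρ : 0 < dist z c := hr.trans_le hz.1
  let e : F := (dist z c : ℂ)⁻¹ • (z - c)
  let g : ℂ → F := fun w ↦ c + Complex.exp w • e
  have norm_e : ‖e‖ = 1 := by
    rw [norm_smul, norm_inv, Complex.norm_of_nonneg hρ.le, ← dist_eq_norm, inv_mul_cancel₀ hρ.ne']
  have dist_g (w : ℂ) : dist (g w) c = exp w.re := dist_add_exp_smul_self c norm_e w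
  have g_log : g (log (dist z c) : ℝ) = z := by
    simp only [g, e, ← Complex.ofReal_exp, exp_log hρ]
    rw [smul_inv_smul₀ (Complex.ofReal_ne_zero.2 hρ.ne'), add_sub_cancel]
  have maps_strip : MapsTo g (verticalStrip (log r) (log R)) {w | dist w c ∈ Ioo r R} :=
    fun w hw ↦ by
      change dist (g w) c ∈ Ioo r R
      rw [dist_g]
      exact ⟨(log_lt_iff_lt_exp hr).1 hw.1, (lt_log_iff_exp_lt hR).1 hw.2⟩
  have maps_closedStrip :
      MapsTo g (verticalClosedStrip (log r) (log R)) {w | dist w c ∈ Icc r R} := fun w hw ↦ by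
    change dist (g w) c ∈ Icc r R
    rw [dist_g]
    exact ⟨(log_le_iff_le_exp hr).1 hw.1, (le_log_iff_exp_le hR).1 hw.2⟩
  have three_lines := norm_le_interp_of_mem_verticalClosedStrip' (f := f ∘ g)
    (z := (log (dist z c) : ℝ)) (log_lt_log hr hrR) ⟨log_le_log hr hz.1, log_le_log hρ hz.2⟩
    (hd.comp (by fun_prop : Differentiable ℂ g).diffContOnCl maps_strip)
    (hB.mono (by
      rw [← Function.comp_assoc, image_comp]; exact image_mono maps_closedStrip.image_subset))
    (fun w (hw : w.re = log r) ↦ ha _ (by rw [mem_sphere, dist_g, hw, exp_log hr]))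
    (fun w (hw : w.re = log R) ↦ hb _ (by rw [mem_sphere, dist_g, hw, exp_log hR]))
  simpa only [Function.comp_apply, g_log, Complex.ofReal_re] using three_lines

variable (E) in
/-- Hölder control of a set `S` by a set `V` relative to `U`: a two-constants theorem for
holomorphic maps `U → E` bounded by `1`, with an exponent that does not depend on the map. A bound
`m` on `V` is used in place of the supremum, so that no boundedness has to be carried along. -/
def IsHolderControlled (U V S : Set F) : Prop :=
  ∃ δ ∈ Ioc (0 : ℝ) 1, ∀ f : F → E, DifferentiableOn ℂ f U → (∀ z ∈ U, ‖f z‖ ≤ 1) →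
    ∀ m ∈ Icc (0 : ℝ) 1, (∀ z ∈ V, ‖f z‖ ≤ m) → ∀ z ∈ S, ‖f z‖ ≤ m ^ δ

namespace IsHolderControlled

variable {U V S T : Set F}

theorem of_subset (h : S ⊆ V) : IsHolderControlled E U V S :=
  ⟨1, ⟨one_pos, le_rfl⟩, fun _ _ _ m _ hV z hz ↦ (hV z (h hz)).trans_eq (rpow_one m).symm⟩

theorem trans (hS : IsHolderControlled E U V S) (hT : IsHolderControlled E U S T) :
    IsHolderControlled E U V T := by
  obtain ⟨δ, hδ, boundS⟩ := hS
  obtain ⟨ε, hε, boundT⟩ := hT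
  refine ⟨δ * ε, ⟨mul_pos hδ.1 hε.1, mul_le_one₀ hδ.2 hε.1.le hε.2⟩, fun f hf hf1 m hm hV ↦ ?_⟩
  rw [rpow_mul hm.1]
  exact boundT f hf hf1 (m ^ δ)
    ⟨rpow_nonneg hm.1 δ, rpow_le_one hm.1 hm.2 hδ.1.le⟩ (boundS f hf hf1 m hm hV)

theorem mono (hS : IsHolderControlled E U V S) (h : T ⊆ S) : IsHolderControlled E U V T :=
  hS.trans (of_subset h)

theorem union (hS : IsHolderControlled E U V S) (hT : IsHolderControlled E U V T) :
    IsHolderControlled E U V (S ∪ T) := by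
  obtain ⟨δ, hδ, boundS⟩ := hS
  obtain ⟨ε, hε, boundT⟩ := hT
  have hmin : 0 < min δ ε := lt_min hδ.1 hε.1
  refine ⟨min δ ε, ⟨hmin, (min_le_left δ ε).trans hδ.2⟩, fun f hf hf1 m hm hV z hz ↦ ?_⟩
  rcases hz with hzS | hzT
  · exact (boundS f hf hf1 m hm hV z hzS).trans
      (rpow_le_rpow_of_exponent_ge' hm.1 hm.2 hmin.le (min_le_left δ ε))
  · exact (boundT f hf hf1 m hm hV z hzT).trans
      (rpow_le_rpow_of_exponent_ge' hm.1 hm.2 hmin.le (min_le_right δ ε))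

theorem concentric_closedBall {c : F} {r s R : ℝ} (hr : 0 < r) (hrs : r ≤ s) (hsR : s < R)
    (hU : closedBall c R ⊆ U) :
    IsHolderControlled E U (closedBall c r) (closedBall c s) := by
  have hs : 0 < s := hr.trans_le hrs
  have log_rs : log r ≤ log s := log_le_log hr hrs
  have log_sR : log s < log R := log_lt_log hs hsR
  have log_rR : 0 < log R - log r := sub_pos.2 (log_rs.trans_lt log_sR)
  have hδ : 1 - (log s - log r) / (log R - log r) ∈ Ioc (0 : ℝ) 1 :=
    ⟨sub_pos.2 ((div_lt_one log_rR).2 (by gcongr)),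
      sub_le_self 1 (div_nonneg (sub_nonneg.2 log_rs) log_rR.le)⟩
  refine ⟨_, hδ, fun f hf hf1 m hm hV z hz ↦ ?_⟩
  rcases le_total (dist z c) r with hzr | hrz
  · exact (hV z hzr).trans (self_le_rpow_of_le_one hm.1 hm.2 hδ.2)
  have hρ : 0 < dist z c := hr.trans_le hrz
  have closure_subset : closure {w | dist w c ∈ Ioo r R} ⊆ U :=
    (closure_minimal (fun w hw ↦ hw.2.le) isClosed_closedBall).trans hU
  have hB : BddAbove ((norm ∘ f) '' {w | dist w c ∈ Icc r R}) :=
    ⟨1, forall_mem_image.2 fun w hw ↦ hf1 w (hU hw.2)⟩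
  calc
    ‖f z‖ ≤ m ^ (1 - (log (dist z c) - log r) / (log R - log r)) *
        1 ^ ((log (dist z c) - log r) / (log R - log r)) :=
      norm_le_interp_of_dist_mem_Icc hr (hrs.trans_lt hsR) ⟨hrz, hz.trans hsR.le⟩
        (hf.mono closure_subset).diffContOnCl hB (fun w hw ↦ hV w (sphere_subset_closedBall hw))
        (fun w hw ↦ hf1 w (hU (sphere_subset_closedBall hw)))
    _ = m ^ (1 - (log (dist z c) - log r) / (log R - log r)) := by rw [one_rpow, mul_one]
    _ ≤ m ^ (1 - (log s - log r) / (log R - log r)) := by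
      refine rpow_le_rpow_of_exponent_ge' hm.1 hm.2 hδ.1.le ?_
      gcongr
      exact hz

theorem closedBall_of_mem_nhds {c : F} {s R : ℝ} (hs : 0 < s) (hsR : s < R)
    (hU : closedBall c R ⊆ U) (hc : S ∈ 𝓝 c) (hS : IsHolderControlled E U V S) :
    IsHolderControlled E U V (closedBall c s) := by
  obtain ⟨r, hr, hrS⟩ := nhds_basis_closedBall.mem_iff.1 hc
  have smaller_ball : closedBall c (min r s) ⊆ S :=
    (closedBall_subset_closedBall (min_le_left r s)).trans hrS
  exact (hS.mono smaller_ball).trans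
    (concentric_closedBall (lt_min hr hs) (min_le_right r s) hsR hU)

theorem exists_mem_nhds (hU : IsOpen U) (hUc : IsPreconnected U)
    (hV : (U ∩ interior V).Nonempty) {z : F} (hz : z ∈ U) :
    ∃ S ∈ 𝓝 z, IsHolderControlled E U V S := by
  suffices U ⊆ {z | ∃ S ∈ 𝓝 z, IsHolderControlled E U V S} from this hz
  refine hUc.subset_of_closure_inter_subset ?_ ?_ ?_
  · refine isOpen_iff_mem_nhds.2 fun z ⟨S, hSz, hS⟩ ↦ ?_
    filter_upwards [eventually_mem_nhds_iff.2 hSz] with w hw using ⟨S, hw, hS⟩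
  · obtain ⟨v, hvU, hvV⟩ := hV
    exact ⟨v, hvU, V, mem_interior_iff_mem_nhds.1 hvV, of_subset subset_rfl⟩
  · rintro z ⟨hz_closure, hzU⟩
    obtain ⟨R, hR, hRU⟩ := nhds_basis_closedBall.mem_iff.1 (hU.mem_nhds hzU)
    obtain ⟨y, ⟨S, hSy, hS⟩, hzy⟩ := Metric.mem_closure_iff.1 hz_closure (R / 4) (by positivity)
    have ball_subset : closedBall y (R / 2) ⊆ U :=
      (closedBall_subset_closedBall' (by rw [dist_comm]; linarith)).trans hRU
    exact ⟨closedBall y (R / 4), closedBall_mem_nhds_of_mem hzy,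
      hS.closedBall_of_mem_nhds (by positivity) (by linarith) ball_subset hSy⟩

theorem of_isCompact {K : Set F} (hU : IsOpen U) (hUc : IsPreconnected U)
    (hV : (U ∩ interior V).Nonempty) (hK : IsCompact K) (hKU : K ⊆ U) :
    IsHolderControlled E U V K := by
  refine hK.induction_on (p := IsHolderControlled E U V) (of_subset (empty_subset V))
    (fun S T hST hT ↦ hT.mono hST) (fun S T hS hT ↦ hS.union hT) fun z hz ↦ ?_
  obtain ⟨S, hSz, hS⟩ := exists_mem_nhds (E := E) hU hUc hV (hKU hz)
  exact ⟨S, mem_nhdsWithin_of_mem_nhds hSz, hS⟩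

theorem exists_iSup_le_iSup_rpow (hVU : V ⊆ U) (hS : IsHolderControlled E U V S) :
    ∃ δ ∈ Ioc (0 : ℝ) 1, ∀ f : F → E, DifferentiableOn ℂ f U → (∀ z ∈ U, ‖f z‖ ≤ 1) →
      (⨆ z ∈ S, ‖f z‖) ≤ (⨆ z ∈ V, ‖f z‖) ^ δ := by
  obtain ⟨δ, hδ, bound⟩ := hS
  refine ⟨δ, hδ, fun f hf hf1 ↦ ?_⟩
  have sup_nonneg : 0 ≤ ⨆ z ∈ V, ‖f z‖ :=
    Real.iSup_nonneg fun z ↦ Real.iSup_nonneg fun _ ↦ norm_nonneg (f z)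
  have sup_le_one : ⨆ z ∈ V, ‖f z‖ ≤ 1 :=
    Real.iSup_le (fun z ↦ Real.iSup_le (fun hz ↦ hf1 z (hVU hz)) zero_le_one) zero_le_one
  have bddAbove_norm : BddAbove (⋃ z, range fun _ : z ∈ V ↦ ‖f z‖) :=
    ⟨1, by rintro _ ⟨_, ⟨z, rfl⟩, hz, rfl⟩; exact hf1 z (hVU hz)⟩
  have sup_rpow_nonneg := rpow_nonneg sup_nonneg δ
  exact Real.iSup_le (fun z ↦ Real.iSup_le
    (bound f hf hf1 _ ⟨sup_nonneg, sup_le_one⟩ (le_ciSup₂ bddAbove_norm) z)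
    sup_rpow_nonneg) sup_rpow_nonneg

end IsHolderControlled

theorem hadamard_three_domains_general {U V W : Set F} (hU : IsOpen U) (hUc : IsPreconnected U)
    (hV : (interior V).Nonempty) (hVU : V ⊆ U) (hW : IsCompact (closure W)) (hWU : closure W ⊆ U) :
    ∃ δ ∈ Ioc (0 : ℝ) 1, ∀ f : F → E, DifferentiableOn ℂ f U → (∀ z ∈ U, ‖f z‖ ≤ 1) →
      (⨆ z ∈ W, ‖f z‖) ≤ (⨆ z ∈ V, ‖f z‖) ^ δ := by
  have meets : (U ∩ interior V).Nonempty :=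
    hV.mono (subset_inter (interior_subset.trans hVU) subset_rfl)
  have controlled : IsHolderControlled E U V (closure W) := .of_isCompact hU hUc meets hW hWU
  exact (controlled.mono subset_closure).exists_iSup_le_iSup_rpow hVU

/-- **Hölder comparison of sup-norms of bounded holomorphic functions on nested domains**
(a Hadamard three-domains inequality).  Let `V ⋐ W ⋐ U` be nonempty bounded open connected
simply connected subsets of `ℂ`.  Then there is `δ ∈ (0, 1]`, depending only on the domains,
such that every holomorphic `f : U → ℂ` with `sup_U |f| ≤ 1` satisfies
`sup_W |f| ≤ (sup_V |f|)^δ`. -/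
theorem hadamard_three_domains
    (V W U : Set ℂ)
    (hVne : V.Nonempty) (hWne : W.Nonempty) (hUne : U.Nonempty)
    (hVo : IsOpen V) (hWo : IsOpen W) (hUo : IsOpen U)
    (hVb : Bornology.IsBounded V) (hWb : Bornology.IsBounded W)
    (hUb : Bornology.IsBounded U)
    (hVc : IsConnected V) (hWc : IsConnected W) (hUc : IsConnected U)
    (hVsc : SimplyConnectedSpace V) (hWsc : SimplyConnectedSpace W)
    (hUsc : SimplyConnectedSpace U)
    (hVW : closure V ⊆ W) (hWU : closure W ⊆ U) :
    ∃ δ : ℝ, δ ∈ Set.Ioc (0 : ℝ) 1 ∧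
      ∀ f : ℂ → ℂ, DifferentiableOn ℂ f U → (∀ z ∈ U, ‖f z‖ ≤ 1) →
        (⨆ z ∈ W, ‖f z‖) ≤ (⨆ z ∈ V, ‖f z‖) ^ δ := by
  have hVU : V ⊆ U := subset_closure.trans (hVW.trans (subset_closure.trans hWU))
  exact hadamard_three_domains_general hUo hUc.isPreconnected (by rwa [hVo.interior_eq]) hVU
    hWb.isCompact_closure hWU
end
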